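/- arXiv:2311.01748 — 4 statements merged into one kernel-verified Lean document; each statement's English description precedes it below -/
import Mathlib

section
/- Let 0 < α < 1 and z ≥ 1 − α. Let ρ, σ₁, σ₂ be n×n positive semidefinite complex matrices with σ₁ ≤ σ₂ in the Loewner order. Then Q_{α,z}(ρ‖σ₁) ≤ Q_{α,z}(ρ‖σ₂). -/
open Matrix
open scoped ComplexOrder

/-- Real power of a positive semidefinite matrix via the spectral decomposition,
applying `x ^ t` (real `rpow`, so with the convention `0 ^ t = 0` for `t ≠ 0`)
to the eigenvalues; returns `0` if the matrix is not Hermitian. -/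
noncomputable def mpow {n : Type*} [Fintype n] [DecidableEq n]
    (A : Matrix n n ℂ) (t : ℝ) : Matrix n n ℂ :=
  if hA : A.IsHermitian then
    (hA.eigenvectorUnitary : Matrix n n ℂ) *
      Matrix.diagonal (fun i => ((hA.eigenvalues i ^ t : ℝ) : ℂ)) *
      star (hA.eigenvectorUnitary : Matrix n n ℂ)
  else 0


/-- The α-z-Rényi quantity `Q_{α,z}(ρ‖σ) = Tr((σ^((1−α)/2z) ρ^(α/z) σ^((1−α)/2z))^z)`. -/
noncomputable def Qaz {n : Type*} [Fintype n] [DecidableEq n]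
    (α z : ℝ) (ρ σ : Matrix n n ℂ) : ℝ :=
  ((mpow (mpow σ ((1 - α) / (2 * z)) * mpow ρ (α / z) * mpow σ ((1 - α) / (2 * z))) z).trace).re

section helpers

variable {n : Type*} [Fintype n] [DecidableEq n]

theorem mpow_posSemidef {A : Matrix n n ℂ} (hA : A.PosSemidef) (t : ℝ) :
    (mpow A t).PosSemidef := by
  rw [mpow, dif_pos hA.1]
  have h : (Matrix.diagonal (fun i => ((hA.1.eigenvalues i ^ t : ℝ) : ℂ))).PosSemidef := by
    apply Matrix.PosSemidef.diagonal
    intro i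
    have := Real.rpow_nonneg (hA.eigenvalues_nonneg i) t
    simpa using this
  exact h.mul_mul_conjTranspose_same _

theorem mpow_mul_self {A : Matrix n n ℂ} (hA : A.PosSemidef) {t : ℝ} (ht : 0 ≤ t) :
    mpow A t * mpow A t = mpow A (t + t) := by
  simp only [mpow, dif_pos hA.1]
  set U : Matrix n n ℂ := (hA.1.eigenvectorUnitary : Matrix n n ℂ) with hU
  have hUU : star U * U = 1 := Unitary.coe_star_mul_self hA.1.eigenvectorUnitary
  set D := Matrix.diagonal (fun i => ((hA.1.eigenvalues i ^ t : ℝ) : ℂ)) with hD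
  have hDD : D * D = Matrix.diagonal (fun i => ((hA.1.eigenvalues i ^ (t + t) : ℝ) : ℂ)) := by
    rw [hD, Matrix.diagonal_mul_diagonal]
    congr 1
    funext i
    rw [Real.rpow_add_of_nonneg (hA.eigenvalues_nonneg i) ht ht]
    push_cast
    rfl
  rw [← hDD]
  calc U * D * star U * (U * D * star U) = U * D * (star U * U) * D * star U := by
        simp only [Matrix.mul_assoc]
    _ = _ := by rw [hUU]; simp only [Matrix.mul_assoc, Matrix.mul_one, Matrix.one_mul]

theorem mpow_trace {A : Matrix n n ℂ} (hA : A.IsHermitian) (t : ℝ) :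
    (mpow A t).trace.re = ∑ i, hA.eigenvalues i ^ t := by
  rw [mpow, dif_pos hA, Matrix.trace_mul_comm, ← Matrix.mul_assoc,
    Unitary.coe_star_mul_self, Matrix.one_mul, Matrix.trace_diagonal, Complex.re_sum]
  simp only [Complex.ofReal_re]

open scoped MatrixOrder Matrix.Norms.L2Operator in
theorem mpow_mono {A B : Matrix n n ℂ} (hA : A.PosSemidef) (hB : B.PosSemidef)
    (hAB : (B - A).PosSemidef) {p : ℝ} (hp0 : 0 ≤ p) (hp1 : p ≤ 1) :
    (mpow B p - mpow A p).PosSemidef := by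
  have key : ∀ C : Matrix n n ℂ, C.PosSemidef → mpow C p = C ^ p := by
    intro C hC
    rw [CFC.rpow_eq_cfc_real (a := C) (Matrix.nonneg_iff_posSemidef.mpr hC), hC.1.cfc_eq, mpow,
      dif_pos hC.1]
    rfl
  have h : A ≤ B := Matrix.le_iff.mpr hAB
  have := CFC.rpow_le_rpow (p := p) ⟨hp0, hp1⟩ h
  rw [key A hA, key B hB]
  exact Matrix.le_iff.mp this

theorem trace_mpow_mono {A B : Matrix n n ℂ} (hA : A.PosSemidef) (hB : B.PosSemidef)
    (hAB : (B - A).PosSemidef) {z : ℝ} (hz : 0 < z) :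
    (mpow A z).trace.re ≤ (mpow B z).trace.re := by
  rcases le_total z 1 with h1 | h1
  · have h := (mpow_mono hA hB hAB hz.le h1).trace_nonneg
    rw [Matrix.trace_sub] at h
    have := (Complex.le_def.mp h).1
    simp at this
    exact this
  · rw [mpow_trace hA.1, mpow_trace hB.1]
    set U : Matrix n n ℂ := (hA.1.eigenvectorUnitary : Matrix n n ℂ) with hU
    set V : Matrix n n ℂ := (hB.1.eigenvectorUnitary : Matrix n n ℂ) with hV
    have hUU : star U * U = 1 := Unitary.coe_star_mul_self hA.1.eigenvectorUnitary
    have hUU' : U * star U = 1 := Unitary.coe_mul_star_self hA.1.eigenvectorUnitary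
    have hVV : star V * V = 1 := Unitary.coe_star_mul_self hB.1.eigenvectorUnitary
    have hVV' : V * star V = 1 := Unitary.coe_mul_star_self hB.1.eigenvectorUnitary
    have hAs : A = U * Matrix.diagonal (fun i => (hA.1.eigenvalues i : ℂ)) * star U :=
      hA.1.spectral_theorem
    have hBs : B = V * Matrix.diagonal (fun i => (hB.1.eigenvalues i : ℂ)) * star V :=
      hB.1.spectral_theorem
    set W := star U * V with hW
    have hsW : star W = star V * U := by rw [hW, star_mul, star_star]
    have hWW : W * star W = 1 := by
      rw [hsW, hW]
      calc star U * V * (star V * U) = star U * (V * star V) * U := by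
            simp only [Matrix.mul_assoc]
        _ = 1 := by rw [hVV', Matrix.mul_one, hUU]
    have hWW' : star W * W = 1 := by
      rw [hsW, hW]
      calc star V * U * (star U * V) = star V * (U * star U) * V := by
            simp only [Matrix.mul_assoc]
        _ = 1 := by rw [hUU', Matrix.mul_one, hVV]
    have hrow : ∀ i, ∑ j, Complex.normSq (W i j) = 1 := by
      intro i
      have h := congrArg Complex.re (congrFun (congrFun hWW i) i)
      simp only [Matrix.mul_apply, Matrix.star_apply, Matrix.one_apply_eq, Complex.re_sum,
        Complex.one_re] at h
      rw [← h]
      refine Finset.sum_congr rfl fun j _ => ?_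
      simp [Complex.normSq_apply]
    have hcol : ∀ j, ∑ i, Complex.normSq (W i j) = 1 := by
      intro j
      have h := congrArg Complex.re (congrFun (congrFun hWW' j) j)
      simp only [Matrix.mul_apply, Matrix.star_apply, Matrix.one_apply_eq, Complex.re_sum,
        Complex.one_re] at h
      rw [← h]
      refine Finset.sum_congr rfl fun i _ => ?_
      simp [Complex.normSq_apply]
    have hUA : star U * A * U = Matrix.diagonal (fun i => (hA.1.eigenvalues i : ℂ)) := by
      conv_lhs => rw [hAs]
      calc _ = (star U * U) * Matrix.diagonal (fun i => (hA.1.eigenvalues i : ℂ)) *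
            (star U * U) := by simp only [Matrix.mul_assoc]
        _ = _ := by rw [hUU, Matrix.one_mul, Matrix.mul_one]
    have hUB : star U * B * U =
        W * Matrix.diagonal (fun i => (hB.1.eigenvalues i : ℂ)) * star W := by
      conv_lhs => rw [hBs]
      rw [hsW, hW]
      simp only [Matrix.mul_assoc]
    have hle : ∀ i, hA.1.eigenvalues i ≤ ∑ j, Complex.normSq (W i j) * hB.1.eigenvalues j := by
      intro i
      have h := (hAB.conjTranspose_mul_mul_same U).diag_nonneg (i := i)
      rw [← Matrix.star_eq_conjTranspose, Matrix.mul_sub, Matrix.sub_mul, hUA, hUB,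
        Matrix.sub_apply, Matrix.diagonal_apply_eq] at h
      have h2 := (Complex.le_def.mp h).1
      rw [Complex.sub_re, Complex.ofReal_re, Complex.zero_re, Matrix.mul_apply,
        Complex.re_sum, sub_nonneg] at h2
      refine h2.trans_eq (Finset.sum_congr rfl fun j _ => ?_)
      rw [Matrix.mul_diagonal, Matrix.star_apply]
      simp [Complex.normSq_apply]
      ring
    calc ∑ i, hA.1.eigenvalues i ^ z
        ≤ ∑ i, ∑ j, Complex.normSq (W i j) * hB.1.eigenvalues j ^ z := by
          refine Finset.sum_le_sum fun i _ => ?_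
          refine (Real.rpow_le_rpow (hA.eigenvalues_nonneg i) (hle i) hz.le).trans ?_
          exact Real.rpow_arith_mean_le_arith_mean_rpow _ _ _
            (fun j _ => Complex.normSq_nonneg _) (hrow i)
            (fun j _ => hB.eigenvalues_nonneg j) h1
      _ = ∑ j, hB.1.eigenvalues j ^ z := by
          rw [Finset.sum_comm]
          refine Finset.sum_congr rfl fun j _ => ?_
          rw [← Finset.sum_mul, hcol, one_mul]

theorem conj_posSemidef {S R : Matrix n n ℂ} (hS : S.PosSemidef) (hR : R.PosSemidef) :
    (S * R * S).PosSemidef := by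
  have h := hR.conjTranspose_mul_mul_same S
  rwa [hS.1.eq] at h

theorem Qaz_swap {α z : ℝ} (hα0 : 0 ≤ α) (hα1 : α ≤ 1) (hz : 0 < z) {ρ σ : Matrix n n ℂ}
    (hρ : ρ.PosSemidef) (hσ : σ.PosSemidef) :
    Qaz α z ρ σ = ((mpow (mpow ρ (α / (2 * z)) * mpow σ ((1 - α) / z) *
      mpow ρ (α / (2 * z))) z).trace).re := by
  rw [Qaz]
  have hS := mpow_posSemidef hσ ((1 - α) / (2 * z))
  have hR := mpow_posSemidef hρ (α / (2 * z))
  have hL := conj_posSemidef hS (mpow_posSemidef hρ (α / z))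
  have hM := conj_posSemidef hR (mpow_posSemidef hσ ((1 - α) / z))
  rw [mpow_trace hL.1, mpow_trace hM.1]
  have e : hL.1.eigenvalues = hM.1.eigenvalues := by
    rw [Matrix.IsHermitian.eigenvalues_eq_eigenvalues_iff]
    have e1 : α / z = α / (2 * z) + α / (2 * z) := by field_simp; ring
    have e2 : (1 - α) / z = (1 - α) / (2 * z) + (1 - α) / (2 * z) := by field_simp; ring
    have t1 : 0 ≤ α / (2 * z) := by positivity
    have t2 : 0 ≤ (1 - α) / (2 * z) := div_nonneg (by linarith) (by linarith)
    rw [e1, e2, ← mpow_mul_self hρ t1, ← mpow_mul_self hσ t2, ← Matrix.mul_assoc,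
      Matrix.mul_assoc (mpow σ _ * mpow ρ _), Matrix.charpoly_mul_comm]
    simp only [Matrix.mul_assoc]
  rw [e]

end helpers

/-- For `0 < α < 1` and `z ≥ 1 − α`, `Q_{α,z}(ρ‖·)` is monotone in the second
argument with respect to the Loewner order. -/
theorem Qaz_mono_right (n : ℕ) (α z : ℝ) (hα0 : 0 < α) (hα1 : α < 1) (hz : 1 - α ≤ z)
    (ρ σ₁ σ₂ : Matrix (Fin n) (Fin n) ℂ)
    (hρ : ρ.PosSemidef) (hσ₁ : σ₁.PosSemidef) (hσ₂ : σ₂.PosSemidef)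
    (hle : (σ₂ - σ₁).PosSemidef) :
    Qaz α z ρ σ₁ ≤ Qaz α z ρ σ₂ := by
  have hz0 : 0 < z := by linarith
  rw [Qaz_swap hα0.le hα1.le hz0 hρ hσ₁, Qaz_swap hα0.le hα1.le hz0 hρ hσ₂]
  have hR := mpow_posSemidef hρ (α / (2 * z))
  refine trace_mpow_mono (conj_posSemidef hR (mpow_posSemidef hσ₁ _))
    (conj_posSemidef hR (mpow_posSemidef hσ₂ _)) ?_ hz0
  rw [← Matrix.sub_mul, ← Matrix.mul_sub]
  refine conj_posSemidef hR (mpow_mono hσ₁ hσ₂ hle (div_nonneg (by linarith) hz0.le) ?_)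
  rw [div_le_one hz0]
  exact hz
end

section
/- Let 0 < α < 1 and z > 0, and let ρ, σ be n×n positive semidefinite complex matrices. Then for every positive definite n×n complex matrix a, Q_{α,z}(ρ‖σ) ≤ α · Tr((a^{1/2} ρ^{α/z} a^{1/2})^{z/α}) + (1 − α) · Tr((a^{−1/2} σ^{(1−α)/z} a^{−1/2})^{z/(1−α)}), where a^{−1/2} is the inverse of the positive definite square root of a. -/
open Matrix
open scoped ComplexOrder

namespace QazAux

/-- Upper triangular. -/
def UpTri {n : ℕ} (R : Matrix (Fin n) (Fin n) ℂ) : Prop := ∀ i j, j < i → R i j = 0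

/-- `X` has, relative to any flag, triangular factors whose diagonal is controlled by `c`. -/
def Good {n : ℕ} (X : Matrix (Fin n) (Fin n) ℂ) (p c : ℝ) : Prop :=
  ∀ W : Matrix (Fin n) (Fin n) ℂ, Wᴴ * W = 1 →
    ∃ W' R : Matrix (Fin n) (Fin n) ℂ, W'ᴴ * W' = 1 ∧ UpTri R ∧ X * W = W' * R ∧
      ∑ i, (‖R i i‖ ^ 2) ^ p ≤ c

lemma exists_qr {n : ℕ} (M : Matrix (Fin n) (Fin n) ℂ) :
    ∃ Q R : Matrix (Fin n) (Fin n) ℂ, Qᴴ * Q = 1 ∧ UpTri R ∧ M = Q * R := by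
  have h : Module.finrank ℂ (EuclideanSpace ℂ (Fin n)) = Fintype.card (Fin n) := by simp
  let f : Fin n → EuclideanSpace ℂ (Fin n) := fun j => WithLp.toLp 2 (fun i => M i j)
  let b := InnerProductSpace.gramSchmidtOrthonormalBasis h f
  refine ⟨Matrix.of fun i j => b j i, Matrix.of fun i j => inner ℂ (b i) (f j), ?_, ?_, ?_⟩
  · ext i j
    have := orthonormal_iff_ite.1 b.orthonormal i j
    rw [PiLp.inner_apply] at this
    simp only [Matrix.mul_apply, Matrix.conjTranspose_apply, Matrix.of_apply, Matrix.one_apply]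
    rw [← this]
    refine Finset.sum_congr rfl fun k _ => ?_
    simp [mul_comm]
  · intro i j hij
    exact InnerProductSpace.gramSchmidtOrthonormalBasis_inv_triangular h f hij
  · ext i j
    have := congrArg (fun v : EuclideanSpace ℂ (Fin n) => v i) (b.sum_repr' (f j))
    simp only [Matrix.mul_apply, Matrix.of_apply]
    simp only [WithLp.ofLp_sum, Finset.sum_apply, PiLp.smul_apply, smul_eq_mul] at this
    change _ = M i j at this
    rw [← this]
    refine Finset.sum_congr rfl fun k _ => ?_
    rw [mul_comm]

lemma UpTri.mul {n : ℕ} {R S : Matrix (Fin n) (Fin n) ℂ} (hR : UpTri R) (hS : UpTri S) :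
    UpTri (R * S) := by
  intro i j hij
  rw [Matrix.mul_apply]
  refine Finset.sum_eq_zero fun k _ => ?_
  rcases lt_or_ge k i with h | h
  · rw [hR i k h, zero_mul]
  · rw [hS k j (lt_of_lt_of_le hij h), mul_zero]

lemma UpTri.mul_diag {n : ℕ} {R S : Matrix (Fin n) (Fin n) ℂ} (hR : UpTri R) (hS : UpTri S)
    (i : Fin n) : (R * S) i i = R i i * S i i := by
  rw [Matrix.mul_apply]
  refine Finset.sum_eq_single i (fun k _ hk => ?_) (by simp)
  rcases lt_or_gt_of_ne hk with h | h
  · rw [hR i k h, zero_mul]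
  · rw [hS k i h, mul_zero]

lemma gram_diag {n : ℕ} (R : Matrix (Fin n) (Fin n) ℂ) (i : Fin n) :
    (Rᴴ * R) i i = ((∑ k, ‖R k i‖ ^ 2 : ℝ) : ℂ) := by
  rw [Matrix.mul_apply]
  push_cast
  refine Finset.sum_congr rfl fun k _ => ?_
  rw [Matrix.conjTranspose_apply, ← Complex.conj_mul']
  rfl

/-- triangular with orthogonal columns of decreasing norm is diagonal -/
lemma diag_of_gram {n : ℕ} (R : Matrix (Fin n) (Fin n) ℂ) (hR : UpTri R) (d : Fin n → ℝ)
    (hd : Antitone d) (h0 : ∀ i, 0 ≤ d i)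
    (h : Rᴴ * R = Matrix.diagonal (fun i => (d i : ℂ))) :
    (∀ i k, k ≠ i → R k i = 0) ∧ ∀ i, ‖R i i‖ ^ 2 = d i := by
  have hcol : ∀ i, ∑ k, ‖R k i‖ ^ 2 = d i := by
    intro i
    have := gram_diag R i
    rw [h, Matrix.diagonal_apply_eq] at this
    exact_mod_cast this.symm
  have hnorm : ∀ i, (∀ k, k ≠ i → R k i = 0) → ‖R i i‖ ^ 2 = d i := by
    intro i hi
    rw [← hcol i]
    symm
    refine Finset.sum_eq_single i (fun k _ hk => ?_) (by simp)
    rw [hi k hk]; simp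
  have key : ∀ i k, k ≠ i → R k i = 0 := by
    intro i
    induction i using WellFoundedLT.induction with
    | ind i ih =>
      intro k hk
      rcases lt_or_gt_of_ne hk with hlt | hgt
      · rcases (h0 i).eq_or_lt with hz | hpos
        · have := hcol i
          rw [← hz, Finset.sum_eq_zero_iff_of_nonneg (fun _ _ => by positivity)] at this
          simpa using this k (Finset.mem_univ k)
        · have hk0 : R k k ≠ 0 := by
            intro h'
            have h1 := hnorm k (ih k hlt)
            rw [h'] at h1
            have := hd hlt.le
            simp at h1
            linarith
          have h2 : (Rᴴ * R) k i = star (R k k) * R k i := by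
            rw [Matrix.mul_apply]
            refine Finset.sum_eq_single k (fun l _ hl => ?_) (by simp)
            rw [Matrix.conjTranspose_apply, ih k hlt l hl]; simp
          rw [h, Matrix.diagonal_apply_ne _ hk] at h2
          rcases mul_eq_zero.1 h2.symm with h3 | h3
          · exact absurd (star_eq_zero.1 h3) hk0
          · exact h3
      · exact hR k i hgt
  exact ⟨key, fun i => hnorm i (key i)⟩

lemma trace_mpow {n : ℕ} (A : Matrix (Fin n) (Fin n) ℂ) (hA : A.IsHermitian) (t : ℝ) :
    ((mpow A t).trace).re = ∑ i, hA.eigenvalues i ^ t := by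
  rw [mpow, dif_pos hA, Matrix.trace_mul_comm, ← Matrix.mul_assoc, Unitary.coe_star_mul_self,
    Matrix.one_mul, Matrix.trace_diagonal, ← Complex.ofReal_sum, Complex.ofReal_re]

lemma trace_mpow_roots {n : ℕ} (A : Matrix (Fin n) (Fin n) ℂ) (hA : A.IsHermitian) (t : ℝ) :
    ((mpow A t).trace).re = (A.charpoly.roots.map (fun x => x.re ^ t)).sum := by
  rw [trace_mpow A hA, hA.roots_charpoly_eq_eigenvalues, Multiset.map_map]
  simp [Finset.sum]

lemma trace_mpow_comm {n : ℕ} (Y : Matrix (Fin n) (Fin n) ℂ) (t : ℝ) :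
    ((mpow (Yᴴ * Y) t).trace).re = ((mpow (Y * Yᴴ) t).trace).re := by
  rw [trace_mpow_roots _ (Matrix.isHermitian_conjTranspose_mul_self Y),
    trace_mpow_roots _ (Matrix.isHermitian_mul_conjTranspose_self Y), Matrix.charpoly_mul_comm]

lemma exists_sorted {n : ℕ} (T : Matrix (Fin n) (Fin n) ℂ) :
    ∃ (V : Matrix (Fin n) (Fin n) ℂ) (d : Fin n → ℝ), Vᴴ * V = 1 ∧ Antitone d ∧ (∀ i, 0 ≤ d i) ∧
      Vᴴ * (Tᴴ * T) * V = Matrix.diagonal (fun i => (d i : ℂ)) ∧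
      ∀ t, ((mpow (Tᴴ * T) t).trace).re = ∑ i, d i ^ t := by
  have hA := Matrix.isHermitian_conjTranspose_mul_self T
  have hP := Matrix.posSemidef_conjTranspose_mul_self T
  let U : Matrix (Fin n) (Fin n) ℂ := (hA.eigenvectorUnitary).1
  have hUU : Uᴴ * U = 1 := Unitary.coe_star_mul_self hA.eigenvectorUnitary
  have hdiag : Uᴴ * (Tᴴ * T) * U = Matrix.diagonal (fun i => (hA.eigenvalues i : ℂ)) := by
    have := hA.conjStarAlgAut_star_eigenvectorUnitary
    rw [Unitary.conjStarAlgAut_star_apply] at this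
    exact this
  let s : Equiv.Perm (Fin n) := Tuple.sort (fun i => - hA.eigenvalues i)
  have hs : Monotone ((fun i => - hA.eigenvalues i) ∘ s) := Tuple.monotone_sort _
  refine ⟨U.submatrix id s, hA.eigenvalues ∘ s, ?_, ?_, ?_, ?_, ?_⟩
  · have := congrArg (fun M => M.submatrix s s) hUU
    simp only [Matrix.submatrix_one_equiv] at this
    rw [← this]; rfl
  · intro i j hij
    have := hs hij
    simp only [Function.comp_apply] at this ⊢
    linarith
  · intro i
    exact hP.eigenvalues_nonneg _
  · have := congrArg (fun M => M.submatrix s s) hdiag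
    simp only [Matrix.submatrix_diagonal_equiv] at this
    exact this
  · intro t
    rw [trace_mpow _ hA]
    exact (Equiv.sum_comp s (fun i => hA.eigenvalues i ^ t)).symm

lemma trace_le_of_good {n : ℕ} (T : Matrix (Fin n) (Fin n) ℂ) (z c : ℝ) (h : Good T z c) :
    ((mpow (Tᴴ * T) z).trace).re ≤ c := by
  obtain ⟨V, d, hV, hd, h0, hdiag, ht⟩ := exists_sorted T
  obtain ⟨W, R, hW, hR, hTV, hle⟩ := h V hV
  have hg : Rᴴ * R = Matrix.diagonal (fun i => (d i : ℂ)) := by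
    rw [← hdiag]
    calc Rᴴ * R = Rᴴ * (Wᴴ * W) * R := by rw [hW, Matrix.mul_one]
      _ = (W * R)ᴴ * (W * R) := by rw [Matrix.conjTranspose_mul]; simp only [Matrix.mul_assoc]
      _ = _ := by rw [← hTV, Matrix.conjTranspose_mul]; simp only [Matrix.mul_assoc]
  have := (diag_of_gram R hR d hd h0 hg).2
  rw [ht]
  simpa only [this] using hle

lemma exists_svd {n : ℕ} (T : Matrix (Fin n) (Fin n) ℂ) :
    ∃ (W V : Matrix (Fin n) (Fin n) ℂ) (g : Fin n → ℂ), Wᴴ * W = 1 ∧ Vᴴ * V = 1 ∧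
      T = W * Matrix.diagonal g * Vᴴ ∧
      ∀ t, ((mpow (Tᴴ * T) t).trace).re = ∑ i, (‖g i‖ ^ 2) ^ t := by
  obtain ⟨V, d, hV, hd, h0, hdiag, ht⟩ := exists_sorted T
  obtain ⟨W, R, hW, hR, hTV⟩ := exists_qr (T * V)
  have hg : Rᴴ * R = Matrix.diagonal (fun i => (d i : ℂ)) := by
    rw [← hdiag]
    calc Rᴴ * R = Rᴴ * (Wᴴ * W) * R := by rw [hW, Matrix.mul_one]
      _ = (W * R)ᴴ * (W * R) := by rw [Matrix.conjTranspose_mul]; simp only [Matrix.mul_assoc]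
      _ = _ := by rw [← hTV, Matrix.conjTranspose_mul]; simp only [Matrix.mul_assoc]
  have hRd := diag_of_gram R hR d hd h0 hg
  have hRR : R = Matrix.diagonal (fun i => R i i) := by
    ext i j
    rcases eq_or_ne i j with rfl | hij
    · simp
    · rw [Matrix.diagonal_apply_ne _ hij, hRd.1 j i hij]
  refine ⟨W, V, fun i => R i i, hW, hV, ?_, ?_⟩
  · rw [← hRR, ← hTV, Matrix.mul_assoc, mul_eq_one_comm.1 hV, Matrix.mul_one]
  · intro t
    rw [ht]
    simp only [hRd.2]

lemma young {α z x y : ℝ} (hα0 : 0 < α) (hα1 : α < 1) (hx : 0 ≤ x) (hy : 0 ≤ y) :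
    (x * y) ^ z ≤ α * x ^ (z / α) + (1 - α) * y ^ (z / (1 - α)) := by
  have h1 : 0 < 1 - α := by linarith
  have := Real.geom_mean_le_arith_mean2_weighted hα0.le h1.le (Real.rpow_nonneg hx (z / α))
    (Real.rpow_nonneg hy (z / (1 - α))) (by ring)
  rwa [← Real.rpow_mul hx, ← Real.rpow_mul hy, div_mul_cancel₀ _ hα0.ne',
    div_mul_cancel₀ _ h1.ne', ← Real.mul_rpow hx hy] at this

lemma Good.mul {n : ℕ} {X Y : Matrix (Fin n) (Fin n) ℂ} {α z c c' : ℝ}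
    (hα0 : 0 < α) (hα1 : α < 1) (hX : Good X (z / α) c) (hY : Good Y (z / (1 - α)) c') :
    Good (X * Y) z (α * c + (1 - α) * c') := by
  intro W hW
  obtain ⟨W1, R1, hW1, hR1, e1, l1⟩ := hY W hW
  obtain ⟨W2, R2, hW2, hR2, e2, l2⟩ := hX W1 hW1
  refine ⟨W2, R2 * R1, hW2, hR2.mul hR1, ?_, ?_⟩
  · rw [Matrix.mul_assoc, e1, ← Matrix.mul_assoc, e2, Matrix.mul_assoc]
  · calc ∑ i, (‖(R2 * R1) i i‖ ^ 2) ^ z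
        ≤ ∑ i, (α * (‖R2 i i‖ ^ 2) ^ (z / α) + (1 - α) * (‖R1 i i‖ ^ 2) ^ (z / (1 - α))) := by
          refine Finset.sum_le_sum fun i _ => ?_
          rw [hR2.mul_diag hR1, norm_mul, mul_pow]
          exact young hα0 hα1 (by positivity) (by positivity)
      _ = α * ∑ i, (‖R2 i i‖ ^ 2) ^ (z / α) + (1 - α) * ∑ i, (‖R1 i i‖ ^ 2) ^ (z / (1 - α)) := by
          rw [Finset.sum_add_distrib, Finset.mul_sum, Finset.mul_sum]
      _ ≤ _ := by
          have : 0 ≤ 1 - α := by linarith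
          gcongr

lemma good_diag {n : ℕ} (g : Fin n → ℂ) {q : ℝ} (hq : 1 ≤ q) :
    Good (Matrix.diagonal g) q (∑ i, (‖g i‖ ^ 2) ^ q) := by
  intro W hW
  obtain ⟨Q, R, hQ, hR, e⟩ := exists_qr (Matrix.diagonal g * W)
  refine ⟨Q, R, hQ, hR, e, ?_⟩
  have hWc : ∀ i, ∑ k, ‖W k i‖ ^ 2 = 1 := by
    intro i
    have := gram_diag W i
    rw [hW, Matrix.one_apply_eq] at this
    exact_mod_cast this.symm
  have hWr : ∀ k, ∑ i, ‖W k i‖ ^ 2 = 1 := by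
    intro k
    have := gram_diag Wᴴ k
    rw [Matrix.conjTranspose_conjTranspose, mul_eq_one_comm.1 hW, Matrix.one_apply_eq] at this
    simp only [Matrix.conjTranspose_apply, norm_star] at this
    exact_mod_cast this.symm
  have hg : Rᴴ * R = (Matrix.diagonal g * W)ᴴ * (Matrix.diagonal g * W) := by
    rw [e, Matrix.conjTranspose_mul, Matrix.mul_assoc, ← Matrix.mul_assoc Qᴴ, hQ, Matrix.one_mul]
  have hcol : ∀ i, ∑ k, ‖R k i‖ ^ 2 = ∑ k, ‖W k i‖ ^ 2 * ‖g k‖ ^ 2 := by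
    intro i
    have h1 := gram_diag R i
    rw [hg, gram_diag] at h1
    have h2 : ∑ k, ‖(Matrix.diagonal g * W) k i‖ ^ 2 = ∑ k, ‖R k i‖ ^ 2 := by exact_mod_cast h1
    rw [← h2]
    refine Finset.sum_congr rfl fun k _ => ?_
    rw [Matrix.diagonal_mul, norm_mul, mul_pow, mul_comm]
  calc ∑ i, (‖R i i‖ ^ 2) ^ q ≤ ∑ i, ∑ k, ‖W k i‖ ^ 2 * (‖g k‖ ^ 2) ^ q := by
        refine Finset.sum_le_sum fun i _ => ?_
        refine le_trans ?_ (Real.rpow_arith_mean_le_arith_mean_rpow Finset.univ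
          (fun k => ‖W k i‖ ^ 2) (fun k => ‖g k‖ ^ 2) (fun _ _ => by positivity) (hWc i)
          (fun _ _ => by positivity) hq)
        refine Real.rpow_le_rpow (by positivity) ?_ (by linarith)
        rw [← hcol i]
        exact Finset.single_le_sum (f := fun k => ‖R k i‖ ^ 2) (fun _ _ => by positivity)
          (Finset.mem_univ i)
    _ = ∑ k, (∑ i, ‖W k i‖ ^ 2) * (‖g k‖ ^ 2) ^ q := by
        rw [Finset.sum_comm]
        simp only [Finset.sum_mul]
    _ = _ := by simp only [hWr, one_mul]

lemma Good.pow {n : ℕ} {X : Matrix (Fin n) (Fin n) ℂ} {q c : ℝ} (h : Good X q c) (m : ℕ) :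
    Good (X ^ (m + 1)) (q / (m + 1)) c := by
  induction m with
  | zero => simpa using h
  | succ m ih =>
    have hm : (0 : ℝ) < (m : ℝ) + 1 := by positivity
    have hm2 : (0 : ℝ) < (m : ℝ) + 1 + 1 := by positivity
    have e1 : 1 - 1 / ((m : ℝ) + 1 + 1) = (m + 1) / (m + 1 + 1) := by field_simp; ring
    have := Good.mul (X := X) (Y := X ^ (m + 1)) (α := 1 / ((m : ℝ) + 1 + 1))
      (z := q / ((m : ℝ) + 1 + 1)) (c := c) (c' := c) (by positivity)
      (by rw [div_lt_one hm2]; linarith)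
      (by convert h using 1; field_simp)
      (by rw [e1]; convert ih using 1; field_simp)
    rw [← pow_succ'] at this
    push_cast
    convert this using 1
    ring

lemma Good.unitary {n : ℕ} {X U V : Matrix (Fin n) (Fin n) ℂ} {q c : ℝ} (h : Good X q c)
    (hU : Uᴴ * U = 1) (hV : Vᴴ * V = 1) : Good (U * X * V) q c := by
  intro W hW
  obtain ⟨W1, R, hW1, hR, e, l⟩ := h (V * W) (by
    rw [Matrix.conjTranspose_mul, Matrix.mul_assoc, ← Matrix.mul_assoc Vᴴ, hV, Matrix.one_mul, hW])
  refine ⟨U * W1, R, ?_, hR, ?_, l⟩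
  · rw [Matrix.conjTranspose_mul, Matrix.mul_assoc, ← Matrix.mul_assoc Uᴴ, hU, Matrix.one_mul, hW1]
  · rw [Matrix.mul_assoc, Matrix.mul_assoc, e, Matrix.mul_assoc]

lemma good_trace {n : ℕ} (X : Matrix (Fin n) (Fin n) ℂ) {p : ℝ} (hp : 0 < p) :
    Good X p ((mpow (Xᴴ * X) p).trace).re := by
  obtain ⟨W, V, g, hW, hV, e, ht⟩ := exists_svd X
  obtain ⟨m, hm⟩ := exists_nat_gt (1 / p)
  have hm' : (0 : ℝ) < (m : ℝ) + 1 := by positivity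
  have hq : 1 ≤ p * ((m : ℝ) + 1) := by
    rw [div_lt_iff₀ hp] at hm
    nlinarith
  choose r hr using fun i => IsAlgClosed.exists_pow_nat_eq (g i) (Nat.succ_pos m)
  have h1 := ((good_diag r hq).pow m).unitary hW
    (V := Vᴴ) (by rw [Matrix.conjTranspose_conjTranspose, mul_eq_one_comm.1 hV])
  rw [Matrix.diagonal_pow, show r ^ (m + 1) = g from funext hr, ← e,
    mul_div_cancel_right₀ _ hm'.ne'] at h1
  rw [ht]
  convert h1 using 1
  refine Finset.sum_congr rfl fun i => ?_
  intro _
  rw [← hr i, norm_pow, ← pow_mul, mul_comm, pow_mul, ← Real.rpow_natCast (‖r i‖ ^ 2),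
    ← Real.rpow_mul (by positivity)]
  congr 1
  push_cast
  ring

lemma mpow_isHermitian {n : ℕ} (A : Matrix (Fin n) (Fin n) ℂ) (t : ℝ) :
    (mpow A t)ᴴ = mpow A t := by
  unfold mpow
  split_ifs with hA
  · simp only [Matrix.star_eq_conjTranspose, Matrix.conjTranspose_mul,
      Matrix.conjTranspose_conjTranspose, Matrix.diagonal_conjTranspose, Matrix.mul_assoc]
    congr 3
    ext i
    simp
  · simp

lemma mpow_mul_self {n : ℕ} {A : Matrix (Fin n) (Fin n) ℂ} (hA : A.PosSemidef) (t : ℝ) :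
    mpow A t * mpow A t = mpow A (2 * t) := by
  simp only [mpow, dif_pos hA.1]
  set U := hA.1.eigenvectorUnitary
  have hUU : star (U : Matrix (Fin n) (Fin n) ℂ) * U = 1 := Unitary.coe_star_mul_self U
  calc _ = (U : Matrix (Fin n) (Fin n) ℂ) * (diagonal (fun i => ((hA.1.eigenvalues i ^ t : ℝ) : ℂ)) *
        ((star (U : Matrix (Fin n) (Fin n) ℂ) * U) *
        diagonal (fun i => ((hA.1.eigenvalues i ^ t : ℝ) : ℂ)))) * star (U : Matrix (Fin n) (Fin n) ℂ) := by
        simp only [Matrix.mul_assoc]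
    _ = _ := by
        rw [hUU, Matrix.one_mul, Matrix.diagonal_mul_diagonal]
        congr 3
        ext i
        rw [← Complex.ofReal_mul, mul_comm 2 t, Real.rpow_mul (hA.eigenvalues_nonneg i),
          Real.rpow_two, sq]

lemma mpow_one {n : ℕ} {A : Matrix (Fin n) (Fin n) ℂ} (hA : A.IsHermitian) : mpow A 1 = A := by
  simp only [mpow, dif_pos hA, Real.rpow_one]
  exact hA.spectral_theorem.symm

end QazAux

/-- Variational upper bound on `Q_{α,z}` for `0 < α < 1`, `z > 0`:
for every positive definite `a`,
`Q_{α,z}(ρ‖σ) ≤ α Tr((a^{1/2} ρ^{α/z} a^{1/2})^{z/α})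
               + (1−α) Tr((a^{−1/2} σ^{(1−α)/z} a^{−1/2})^{z/(1−α)})`. -/
theorem Qaz_variational_le (n : ℕ) (α z : ℝ) (hα0 : 0 < α) (hα1 : α < 1) (hz : 0 < z)
    (ρ σ : Matrix (Fin n) (Fin n) ℂ) (hρ : ρ.PosSemidef) (hσ : σ.PosSemidef)
    (a : Matrix (Fin n) (Fin n) ℂ) (ha : a.PosDef) :
    Qaz α z ρ σ ≤
      α * ((mpow (mpow a (1 / 2) * mpow ρ (α / z) * mpow a (1 / 2)) (z / α)).trace).re
        + (1 - α) * ((mpow ((mpow a (1 / 2))⁻¹ * mpow σ ((1 - α) / z) * (mpow a (1 / 2))⁻¹)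
            (z / (1 - α))).trace).re := by
  have hα1' : 0 < 1 - α := by linarith
  set A := mpow a (1 / 2) with hA
  set P := mpow ρ (α / (2 * z)) with hP
  set S := mpow σ ((1 - α) / (2 * z)) with hS
  have eP : mpow ρ (α / z) = P * P := by
    rw [hP, QazAux.mpow_mul_self hρ]; congr 1; field_simp
  have eS : mpow σ ((1 - α) / z) = S * S := by
    rw [hS, QazAux.mpow_mul_self hσ]; congr 1; field_simp
  have hAH : Aᴴ = A := QazAux.mpow_isHermitian _ _
  have hPH : Pᴴ = P := QazAux.mpow_isHermitian _ _
  have hSH : Sᴴ = S := QazAux.mpow_isHermitian _ _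
  have hAA : A * A = a := by
    rw [hA, QazAux.mpow_mul_self ha.posSemidef]
    norm_num
    exact QazAux.mpow_one ha.1
  have hAu : IsUnit A.det := by
    have h1 : IsUnit a.det := (Matrix.isUnit_iff_isUnit_det a).1 ha.isUnit
    rw [← hAA, Matrix.det_mul] at h1
    exact isUnit_of_mul_isUnit_left h1
  have hX := QazAux.good_trace (P * A) (p := z / α) (by positivity)
  have hY := QazAux.good_trace (A⁻¹ * S) (p := z / (1 - α)) (by positivity)
  have h := QazAux.trace_le_of_good _ _ _ (hX.mul hα0 hα1 hY)
  rw [QazAux.trace_mpow_comm (A⁻¹ * S)] at h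
  have eT : P * A * (A⁻¹ * S) = P * S := by
    rw [Matrix.mul_assoc, ← Matrix.mul_assoc A, Matrix.mul_nonsing_inv A hAu, Matrix.one_mul]
  rw [eT] at h
  simp only [Matrix.conjTranspose_mul, Matrix.conjTranspose_nonsing_inv, hAH, hPH, hSH] at h
  rw [Qaz, eP, eS]
  simpa only [← hS, Matrix.mul_assoc] using h
end

section
/- Let 0 < α < 1 and z > 0, and let ρ, σ be n×n positive semidefinite complex matrices. Then Q_{α,z}(ρ‖σ) ≤ (Tr ρ)^α · (Tr σ)^{1−α}. -/
open Matrix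
open scoped ComplexOrder

set_option linter.unusedSectionVars false

namespace AZ

variable {n : Type*} [Fintype n] [DecidableEq n]

/-- diagonal matrix with real entries -/
noncomputable def dg (d : n → ℝ) : Matrix n n ℂ := Matrix.diagonal (fun i => ((d i : ℝ) : ℂ))

/-- trace of power -/
noncomputable def F (M : Matrix n n ℂ) (t : ℝ) : ℝ := ((mpow M t).trace).re

lemma dg_mul (d e : n → ℝ) : dg d * dg e = dg (fun i => d i * e i) := by
  simp [dg, Matrix.diagonal_mul_diagonal]

lemma dg_herm (d : n → ℝ) : (dg d)ᴴ = dg d := by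
  simp only [dg, Matrix.diagonal_conjTranspose]
  congr 1
  funext i
  simp

lemma spec {A : Matrix n n ℂ} (hA : A.IsHermitian) :
    ∃ (U : Matrix n n ℂ) (d : n → ℝ), Uᴴ * U = 1 ∧ U * Uᴴ = 1 ∧ A = U * dg d * Uᴴ ∧
      (∀ t, mpow A t = U * dg (fun i => d i ^ t) * Uᴴ) ∧ (A.PosSemidef → ∀ i, 0 ≤ d i) := by
  refine ⟨hA.eigenvectorUnitary, hA.eigenvalues, ?_, ?_, ?_, ?_, ?_⟩
  · exact Unitary.coe_star_mul_self hA.eigenvectorUnitary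
  · exact Unitary.coe_mul_star_self hA.eigenvectorUnitary
  · exact hA.spectral_theorem
  · intro t
    rw [mpow, dif_pos hA]
    rfl
  · intro h i
    exact h.eigenvalues_nonneg i

lemma conj_herm (U : Matrix n n ℂ) (d : n → ℝ) : (U * dg d * Uᴴ).IsHermitian := by
  unfold Matrix.IsHermitian
  simp [Matrix.conjTranspose_mul, dg_herm, Matrix.mul_assoc]

lemma F_conj {U : Matrix n n ℂ} (h1 : Uᴴ * U = 1) (d : n → ℝ) (t : ℝ) :
    F (U * dg d * Uᴴ) t = ∑ i, d i ^ t := by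
  have hM := conj_herm U d
  have hc : (U * dg d * Uᴴ).charpoly.roots
      = Multiset.map (fun i => ((d i : ℝ) : ℂ)) Finset.univ.val := by
    rw [Matrix.charpoly_mul_comm, ← Matrix.mul_assoc, h1, Matrix.one_mul, dg,
      Matrix.charpoly_diagonal, Polynomial.roots_prod]
    · simp
    · simp [Finset.prod_ne_zero_iff, Polynomial.X_sub_C_ne_zero]
  rw [hM.roots_charpoly_eq_eigenvalues] at hc
  have hs := congrArg (fun s : Multiset ℂ => (s.map (fun x => x.re ^ t)).sum) hc
  simp only [Multiset.map_map, Function.comp_def] at hs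
  rw [F, mpow, dif_pos hM, Matrix.trace_mul_comm, ← Matrix.mul_assoc,
    Unitary.coe_star_mul_self, Matrix.one_mul, Matrix.trace_diagonal]
  simpa using hs

lemma F_mul_comm {A B : Matrix n n ℂ} (h1 : (A * B).IsHermitian) (h2 : (B * A).IsHermitian)
    (t : ℝ) : F (A * B) t = F (B * A) t := by
  have he : h1.eigenvalues = h2.eigenvalues :=
    (Matrix.IsHermitian.eigenvalues_eq_eigenvalues_iff h1 h2).2 (Matrix.charpoly_mul_comm A B)
  simp only [F, mpow, dif_pos h1, dif_pos h2]
  rw [Matrix.trace_mul_comm, ← Matrix.mul_assoc,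
    Unitary.coe_star_mul_self, Matrix.one_mul, Matrix.trace_mul_comm, ← Matrix.mul_assoc,
    Unitary.coe_star_mul_self, Matrix.one_mul, he]

lemma diag_re {U : Matrix n n ℂ} (d : n → ℝ) (X : Matrix n n ℂ) (j : n) :
    ((Xᴴ * (U * dg d * Uᴴ) * X) j j).re = ∑ i, Complex.normSq ((Uᴴ * X) i j) * d i := by
  have : Xᴴ * (U * dg d * Uᴴ) * X = (Uᴴ * X)ᴴ * (dg d * (Uᴴ * X)) := by
    simp [Matrix.conjTranspose_mul, Matrix.mul_assoc]
  rw [this, Matrix.mul_apply, Complex.re_sum]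
  refine Finset.sum_congr rfl fun i _ => ?_
  rw [dg, Matrix.diagonal_mul, Matrix.conjTranspose_apply]
  simp [Complex.normSq_apply]
  ring

lemma col_sum (W : Matrix n n ℂ) (j : n) :
    ∑ i, Complex.normSq (W i j) = ((Wᴴ * W) j j).re := by
  rw [Matrix.mul_apply, Complex.re_sum]
  refine Finset.sum_congr rfl fun i _ => ?_
  rw [Matrix.conjTranspose_apply]
  simp [Complex.normSq_apply]

lemma row_sum (W : Matrix n n ℂ) (i : n) :
    ∑ j, Complex.normSq (W i j) = ((W * Wᴴ) i i).re := by
  rw [Matrix.mul_apply, Complex.re_sum]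
  refine Finset.sum_congr rfl fun i _ => ?_
  rw [Matrix.conjTranspose_apply]
  simp [Complex.normSq_apply]

/-- rows of a partial isometry -/
lemma row_le {W : Matrix n n ℂ} {e : n → ℝ} (he : ∀ i, e i = 0 ∨ e i = 1)
    (hW : Wᴴ * W = dg e) (i : n) : ∑ j, Complex.normSq (W i j) ≤ 1 := by
  have hee : dg e * dg e = dg e := by
    rw [dg_mul]; congr 1; funext i; rcases he i with h | h <;> simp [h]
  have h0 : (W - W * dg e)ᴴ * (W - W * dg e) = 0 := by
    simp only [Matrix.conjTranspose_sub, Matrix.conjTranspose_mul, dg_herm, Matrix.mul_sub,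
      Matrix.sub_mul, Matrix.mul_assoc, hW]
    simp only [← Matrix.mul_assoc Wᴴ, hW, hee]
    simp
  have h1 : W = W * dg e := by
    have := Matrix.conjTranspose_mul_self_eq_zero.1 h0
    exact sub_eq_zero.1 this
  have h2 : (W * Wᴴ)ᴴ * (W * Wᴴ) = W * Wᴴ := by
    rw [Matrix.conjTranspose_mul, Matrix.conjTranspose_conjTranspose, Matrix.mul_assoc,
      ← Matrix.mul_assoc Wᴴ, hW, ← Matrix.mul_assoc, ← h1]
  have h3 := col_sum (W * Wᴴ) i
  rw [h2, ← row_sum] at h3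
  have h4 : Complex.normSq ((W * Wᴴ) i i) ≤ ∑ j, Complex.normSq ((W * Wᴴ) j i) :=
    Finset.single_le_sum (f := fun j => Complex.normSq ((W * Wᴴ) j i))
      (fun _ _ => Complex.normSq_nonneg _) (Finset.mem_univ i)
  have h5 := row_sum W i
  rw [h3, Complex.normSq_apply, ← h5] at h4
  nlinarith [mul_self_nonneg (((W * Wᴴ) i i).im)]

lemma convex_real {w : n → n → ℝ} {l : n → ℝ} {u : ℝ} (hu : 1 ≤ u) (hl : ∀ i, 0 ≤ l i)
    (hw : ∀ i j, 0 ≤ w i j) (hc : ∀ j, ∑ i, w i j ≤ 1) (hr : ∀ i, ∑ j, w i j ≤ 1) :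
    ∑ j, (∑ i, w i j * l i) ^ u ≤ ∑ i, l i ^ u := by
  have h1 : ∀ j, (∑ i, w i j * l i) ^ u ≤ ∑ i, w i j * l i ^ u := by
    intro j
    have := (convexOn_rpow hu).map_add_sum_le (t := Finset.univ) (w := fun i => w i j)
      (p := l) (v := 1 - ∑ i, w i j) (q := 0) (fun i _ => hw i j) (by simp)
      (fun i _ => hl i) (by linarith [hc j]) (by simp)
    simpa [Real.zero_rpow (by linarith : u ≠ 0)] using this
  calc _ ≤ ∑ j, ∑ i, w i j * l i ^ u := Finset.sum_le_sum fun j _ => h1 j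
    _ = ∑ i, (∑ j, w i j) * l i ^ u := by
        rw [Finset.sum_comm]; simp [Finset.sum_mul]
    _ ≤ _ := Finset.sum_le_sum fun i _ =>
        mul_le_of_le_one_left (Real.rpow_nonneg (hl i) _) (hr i)

lemma concave_real {w : n → n → ℝ} {l : n → ℝ} {u : ℝ} (hu0 : 0 ≤ u) (hu : u ≤ 1)
    (hl : ∀ i, 0 ≤ l i)
    (hw : ∀ i j, 0 ≤ w i j) (hc : ∀ j, ∑ i, w i j = 1) (hr : ∀ i, ∑ j, w i j = 1) :
    ∑ i, l i ^ u ≤ ∑ j, (∑ i, w i j * l i) ^ u := by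
  have h1 : ∀ j, ∑ i, w i j * l i ^ u ≤ (∑ i, w i j * l i) ^ u := by
    intro j
    have := (Real.concaveOn_rpow hu0 hu).le_map_sum (t := Finset.univ) (w := fun i => w i j)
      (p := l) (fun i _ => hw i j) (hc j) (fun i _ => hl i)
    simpa using this
  calc ∑ i, l i ^ u = ∑ i, (∑ j, w i j) * l i ^ u := by simp [hr]
    _ = ∑ j, ∑ i, w i j * l i ^ u := by
        rw [Finset.sum_comm]; simp [Finset.sum_mul]
    _ ≤ _ := Finset.sum_le_sum fun j _ => h1 j

lemma peierls_convex {H X : Matrix n n ℂ} (hH : H.PosSemidef) {e : n → ℝ}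
    (he : ∀ i, e i = 0 ∨ e i = 1) (hX : Xᴴ * X = dg e) {u : ℝ} (hu : 1 ≤ u) :
    ∑ j, ((Xᴴ * H * X) j j).re ^ u ≤ F H u := by
  obtain ⟨U, d, h1, h2, h3, -, h5⟩ := spec hH.1
  have hd := h5 hH
  rw [h3, F_conj h1]
  simp only [diag_re]
  have hW : (Uᴴ * X)ᴴ * (Uᴴ * X) = dg e := by
    rw [Matrix.conjTranspose_mul, Matrix.conjTranspose_conjTranspose, Matrix.mul_assoc,
      ← Matrix.mul_assoc U, h2, Matrix.one_mul, hX]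
  refine convex_real hu hd (fun i j => Complex.normSq_nonneg _) (fun j => ?_) (row_le he hW)
  rw [col_sum, hW]
  rcases he j with h | h <;> simp [dg, h]

lemma peierls_concave {H X : Matrix n n ℂ} (hH : H.PosSemidef)
    (hX : Xᴴ * X = 1) (hX' : X * Xᴴ = 1) {u : ℝ} (hu0 : 0 ≤ u) (hu : u ≤ 1) :
    F H u ≤ ∑ j, ((Xᴴ * H * X) j j).re ^ u := by
  obtain ⟨U, d, h1, h2, h3, -, h5⟩ := spec hH.1
  have hd := h5 hH
  rw [h3, F_conj h1]
  simp only [diag_re]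
  have hW : (Uᴴ * X)ᴴ * (Uᴴ * X) = 1 := by
    rw [Matrix.conjTranspose_mul, Matrix.conjTranspose_conjTranspose, Matrix.mul_assoc,
      ← Matrix.mul_assoc U, h2, Matrix.one_mul, hX]
  have hW' : (Uᴴ * X) * (Uᴴ * X)ᴴ = 1 := by
    rw [Matrix.conjTranspose_mul, Matrix.conjTranspose_conjTranspose, Matrix.mul_assoc,
      ← Matrix.mul_assoc X, hX', Matrix.one_mul, h1]
  refine concave_real hu0 hu hd (fun i j => Complex.normSq_nonneg _) (fun j => ?_) (fun j => ?_)
  · rw [col_sum, hW]; simp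
  · rw [row_sum, hW']; simp

lemma holder_real {f g : n → ℝ} (hf : ∀ i, 0 ≤ f i) (hg : ∀ i, 0 ≤ g i) {α z : ℝ}
    (h0 : 0 < α) (h1 : α < 1) :
    ∑ i, (f i * g i) ^ z ≤ (∑ i, f i ^ (z / α)) ^ α * (∑ i, g i ^ (z / (1 - α))) ^ (1 - α) := by
  have hpq : (1 / α).HolderConjugate (1 / (1 - α)) := by
    rw [Real.holderConjugate_iff]
    refine ⟨by rw [lt_div_iff₀ h0]; linarith, by simp⟩
  have := Real.inner_le_Lp_mul_Lq_of_nonneg Finset.univ hpq (f := fun i => f i ^ z)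
    (g := fun i => g i ^ z) (fun i _ => Real.rpow_nonneg (hf i) _)
    (fun i _ => Real.rpow_nonneg (hg i) _)
  simp only [one_div_one_div] at this
  convert this using 3 with i
  · exact Real.mul_rpow (hf i) (hg i)
  · refine Finset.sum_congr rfl fun i _ => ?_
    rw [← Real.rpow_mul (hf i)]; congr 1; ring
  · refine Finset.sum_congr rfl fun i _ => ?_
    rw [← Real.rpow_mul (hg i)]; congr 1; ring

lemma psd_sandwich {P K : Matrix n n ℂ} (hP : Pᴴ = P) (hK : Kᴴ = K) :
    ((P * K) * (K * P)).PosSemidef := by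
  have := Matrix.posSemidef_conjTranspose_mul_self (K * P)
  rwa [Matrix.conjTranspose_mul, hP, hK] at this

lemma psd_sq {K : Matrix n n ℂ} (hK : Kᴴ = K) : (K * K).PosSemidef := by
  have := Matrix.posSemidef_conjTranspose_mul_self K
  rwa [hK] at this

lemma F_nonneg {H : Matrix n n ℂ} (hH : H.PosSemidef) (t : ℝ) : 0 ≤ F H t := by
  obtain ⟨U, d, h1, h2, h3, -, h5⟩ := spec hH.1
  rw [h3, F_conj h1]
  exact Finset.sum_nonneg fun i _ => Real.rpow_nonneg (h5 hH i) _

lemma diag_nonneg {H : Matrix n n ℂ} (hH : H.PosSemidef) (X : Matrix n n ℂ) (j : n) :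
    0 ≤ ((Xᴴ * H * X) j j).re := by
  obtain ⟨U, d, h1, h2, h3, -, h5⟩ := spec hH.1
  rw [h3, diag_re]
  exact Finset.sum_nonneg fun i _ => mul_nonneg (Complex.normSq_nonneg _) (h5 hH i)

lemma conj_mul {U : Matrix n n ℂ} (h1 : Uᴴ * U = 1) (d e : n → ℝ) :
    (U * dg d * Uᴴ) * (U * dg e * Uᴴ) = U * dg (fun i => d i * e i) * Uᴴ := by
  rw [← dg_mul]
  simp only [Matrix.mul_assoc]
  rw [← Matrix.mul_assoc Uᴴ U, h1, Matrix.one_mul]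

lemma F_comm {P K : Matrix n n ℂ} (hP : Pᴴ = P) (hK : Kᴴ = K) (z : ℝ) :
    F ((K * P) * (P * K)) z = F ((P * K) * (K * P)) z :=
  F_mul_comm (psd_sandwich hK hP).1 (psd_sandwich hP hK).1 z

lemma dg_one : dg (fun _ : n => (1 : ℝ)) = 1 := by
  simp [dg]

lemma base_small {P K : Matrix n n ℂ} (hP : Pᴴ = P) (hK : Kᴴ = K) {α z : ℝ}
    (h0 : 0 < α) (h1 : α < 1) (hz : 0 < z) (hz1 : z ≤ 1) (hu : 1 ≤ z / (1 - α)) :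
    F ((K * P) * (P * K)) z ≤ F (P * P) (z / α) ^ α * F (K * K) (z / (1 - α)) ^ (1 - α) := by
  rw [F_comm hP hK]
  obtain ⟨U, d, u1, u2, u3, -, -⟩ := spec (A := P) hP
  have e1 := peierls_concave (psd_sandwich hP hK) u1 u2 hz.le hz1
  have e2 := peierls_convex (psd_sq hK) (e := fun _ => 1) (fun _ => Or.inr rfl)
    (u1.trans dg_one.symm) hu
  have hnn := diag_nonneg (psd_sq hK) U
  have e3 : F (P * P) (z / α) = ∑ i, (d i * d i) ^ (z / α) := by
    rw [u3, conj_mul u1, F_conj u1]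
  have e4 : ∀ j, ((Uᴴ * (P * K * (K * P)) * U) j j).re
      = (d j * d j) * ((Uᴴ * (K * K) * U) j j).re := by
    intro j
    have : Uᴴ * (P * K * (K * P)) * U = dg d * (Uᴴ * (K * K) * U) * dg d := by
      have a1 : Uᴴ * P = dg d * Uᴴ := by
        rw [u3, ← Matrix.mul_assoc, ← Matrix.mul_assoc, u1, Matrix.one_mul]
      have a2 : P * U = U * dg d := by
        rw [u3, Matrix.mul_assoc, u1, Matrix.mul_one]
      calc Uᴴ * (P * K * (K * P)) * U = (Uᴴ * P) * (K * K) * (P * U) := by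
            simp only [Matrix.mul_assoc]
        _ = _ := by rw [a1, a2]; simp only [Matrix.mul_assoc]
    rw [this, dg, Matrix.mul_diagonal, Matrix.diagonal_mul]
    simp
    ring
  simp only [e4] at e1
  have e5 := holder_real (f := fun i => d i * d i) (g := fun j => ((Uᴴ * (K * K) * U) j j).re)
    (fun i => mul_self_nonneg _) hnn (z := z) h0 h1
  rw [e3]
  refine (e1.trans e5).trans ?_
  refine mul_le_mul_of_nonneg_left ?_ (Real.rpow_nonneg
    (Finset.sum_nonneg fun i _ => Real.rpow_nonneg (mul_self_nonneg _) _) _)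
  exact Real.rpow_le_rpow (Finset.sum_nonneg fun i _ => Real.rpow_nonneg (hnn i) _) e2
    (by linarith)

lemma cs_col (A B : Matrix n n ℂ) (j : n) :
    ((Aᴴ * B) j j).re ^ 2 ≤ ((Aᴴ * A) j j).re * ((Bᴴ * B) j j).re := by
  rw [← col_sum, ← col_sum]
  have h1 : ((Aᴴ * B) j j).re ≤ ∑ i, ‖A i j‖ * ‖B i j‖ := by
    rw [Matrix.mul_apply, Complex.re_sum]
    refine Finset.sum_le_sum fun i _ => ?_
    refine (Complex.re_le_norm _).trans ?_
    rw [norm_mul, Matrix.conjTranspose_apply, norm_star]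
  have h1' : -((Aᴴ * B) j j).re ≤ ∑ i, ‖A i j‖ * ‖B i j‖ := by
    rw [Matrix.mul_apply, Complex.re_sum, ← Finset.sum_neg_distrib]
    refine Finset.sum_le_sum fun i _ => ?_
    refine (neg_le_abs _).trans ((Complex.abs_re_le_norm _).trans ?_)
    rw [norm_mul, Matrix.conjTranspose_apply, norm_star]
  have h2 := Finset.sum_mul_sq_le_sq_mul_sq Finset.univ (fun i => ‖A i j‖) (fun i => ‖B i j‖)
  simp only [Complex.normSq_eq_norm_sq]
  refine le_trans ?_ h2
  exact sq_le_sq' (by linarith) h1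

lemma base_large {P K : Matrix n n ℂ} (hP : Pᴴ = P) (hK : Kᴴ = K) {α z : ℝ}
    (h0 : 0 < α) (h1 : α < 1) (hz1 : 1 ≤ z) :
    F ((K * P) * (P * K)) z ≤ F (P * P) (z / α) ^ α * F (K * K) (z / (1 - α)) ^ (1 - α) := by
  have hz : 0 < z := by linarith
  rw [F_comm hP hK]
  have hpsd := psd_sandwich hP hK
  obtain ⟨V, m, v1, v2, v3, -, v5⟩ := spec hpsd.1
  have hm := v5 hpsd
  let N : n → ℝ := fun i => (Real.sqrt (m i))⁻¹
  let e : n → ℝ := fun i => if m i = 0 then 0 else 1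
  let X := K * P * V * dg N
  have hVM : Vᴴ * (P * K * (K * P)) * V = dg m := by
    rw [v3]
    simp only [Matrix.mul_assoc, v1, Matrix.mul_one]
    rw [← Matrix.mul_assoc, v1, Matrix.one_mul]
  have hXX : Xᴴ * X = dg e := by
    have : Xᴴ * X = dg N * (Vᴴ * (P * K * (K * P)) * V) * dg N := by
      simp only [X, Matrix.conjTranspose_mul, hP, hK, dg_herm, Matrix.mul_assoc]
    rw [this, hVM, dg_mul, dg_mul]
    congr 1
    funext i
    by_cases h : m i = 0
    · simp [e, h]
    · have hpos : 0 < m i := lt_of_le_of_ne (hm i) (Ne.symm h)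
      have hs := Real.sqrt_pos.2 hpos
      simp only [N, e, h, if_false]
      field_simp
      exact (Real.sq_sqrt hpos.le).symm
  have hA := peierls_convex (psd_sq hK) (e := e)
    (fun i => by by_cases h : m i = 0 <;> simp [e, h]) hXX (u := z / (1 - α))
    (by rw [le_div_iff₀ (by linarith)]; linarith)
  have hB := peierls_convex (psd_sq hP) (e := fun _ => 1) (fun _ => Or.inr rfl)
    (v1.trans dg_one.symm) (u := z / α) (by rw [le_div_iff₀ h0]; linarith)
  have nA := diag_nonneg (psd_sq hK) X
  have nB := diag_nonneg (psd_sq hP) V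
  have key : ∀ j, m j ≤ ((Vᴴ * (P * P) * V) j j).re * ((Xᴴ * (K * K) * X) j j).re := by
    intro j
    have c := cs_col (K * X) (P * V) j
    have c1 : (K * X)ᴴ * (P * V) = dg (fun i => N i * m i) := by
      have : (K * X)ᴴ * (P * V) = dg N * (Vᴴ * (P * K * (K * P)) * V) := by
        simp only [X, Matrix.conjTranspose_mul, hP, hK, dg_herm, Matrix.mul_assoc]
      rw [this, hVM, dg_mul]
    have c2 : (K * X)ᴴ * (K * X) = Xᴴ * (K * K) * X := by
      simp only [Matrix.conjTranspose_mul, hK, Matrix.mul_assoc]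
    have c3 : (P * V)ᴴ * (P * V) = Vᴴ * (P * P) * V := by
      simp only [Matrix.conjTranspose_mul, hP, Matrix.mul_assoc]
    rw [c1, c2, c3] at c
    have c4 : ((dg (fun i => N i * m i)) j j).re ^ 2 = m j := by
      simp only [dg, Matrix.diagonal_apply_eq, Complex.ofReal_re, N]
      by_cases h : m j = 0
      · simp [h]
      · have hpos : 0 < m j := lt_of_le_of_ne (hm j) (Ne.symm h)
        rw [mul_pow, inv_pow, Real.sq_sqrt hpos.le]
        field_simp
    rw [c4] at c
    linarith
  have hF : F (P * K * (K * P)) z = ∑ i, m i ^ z := by rw [v3, F_conj v1]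
  rw [hF]
  have hol := holder_real nB nA (z := z) h0 h1
  refine (Finset.sum_le_sum fun i _ => Real.rpow_le_rpow (hm i) (key i) hz.le).trans
    (hol.trans ?_)
  refine mul_le_mul
    (Real.rpow_le_rpow (Finset.sum_nonneg fun i _ => Real.rpow_nonneg (nB i) _) hB h0.le)
    (Real.rpow_le_rpow (Finset.sum_nonneg fun i _ => Real.rpow_nonneg (nA i) _) hA
      (by linarith))
    (Real.rpow_nonneg (Finset.sum_nonneg fun i _ => Real.rpow_nonneg (nA i) _) _)
    (Real.rpow_nonneg (F_nonneg (psd_sq hP) _) _)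

lemma mpow_herm {A : Matrix n n ℂ} (hA : A.IsHermitian) (t : ℝ) : (mpow A t)ᴴ = mpow A t := by
  obtain ⟨U, d, h1, h2, h3, h4, h5⟩ := spec hA
  rw [h4]
  exact conj_herm U _

lemma mpow_mul {A : Matrix n n ℂ} (hA : A.PosSemidef) {s t : ℝ} (hs : 0 < s) (ht : 0 < t) :
    mpow A s * mpow A t = mpow A (s + t) := by
  obtain ⟨U, d, h1, h2, h3, h4, h5⟩ := spec hA.1
  rw [h4, h4, h4, conj_mul h1]
  congr 3
  funext i
  exact (Real.rpow_add_of_nonneg (h5 hA i) hs.le ht.le).symm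

lemma mpow_one {A : Matrix n n ℂ} (hA : A.PosSemidef) : mpow A 1 = A := by
  obtain ⟨U, d, h1, h2, h3, h4, h5⟩ := spec hA.1
  rw [h4]
  simp only [Real.rpow_one]
  exact h3.symm

lemma mpow_half {A : Matrix n n ℂ} (hA : A.PosSemidef) : mpow A (1/2) * mpow A (1/2) = A := by
  rw [mpow_mul hA (by norm_num) (by norm_num), add_halves, mpow_one hA]

lemma F_mpow {A : Matrix n n ℂ} (hA : A.PosSemidef) (s t : ℝ) :
    F (mpow A s) t = F A (s * t) := by
  obtain ⟨U, d, h1, h2, h3, h4, h5⟩ := spec hA.1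
  rw [h4, F_conj h1]
  conv_rhs => rw [h3, F_conj h1]
  exact Finset.sum_congr rfl fun i _ => (Real.rpow_mul (h5 hA i) _ _).symm

lemma F_sq {A : Matrix n n ℂ} (hA : A.PosSemidef) (t : ℝ) : F (A * A) t = F A (2 * t) := by
  rw [← F_mpow hA]
  congr 1
  rw [show (2 : ℝ) = 1 + 1 by norm_num, ← mpow_mul hA one_pos one_pos, mpow_one hA]

lemma mpow_psd {A : Matrix n n ℂ} (hA : A.PosSemidef) {t : ℝ} (ht : 0 < t) :
    (mpow A t).PosSemidef := by
  have := psd_sq (mpow_herm hA.1 (t / 2))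
  rwa [mpow_mul hA (by linarith) (by linarith), add_halves] at this

lemma F_one {A : Matrix n n ℂ} (hA : A.PosSemidef) : F A 1 = A.trace.re := by
  rw [F, mpow_one hA]

/-- Hölder, by induction on the lower bound for the exponent of the second factor. -/
lemma holder_ind (k : ℕ) : ∀ (P K : Matrix n n ℂ) (α z : ℝ), Pᴴ = P → K.PosSemidef →
    0 < α → α < 1 → 0 < z → 1 ≤ 2 ^ k * (z / (1 - α)) →
    F ((K * P) * (P * K)) z ≤ F (P * P) (z / α) ^ α * F (K * K) (z / (1 - α)) ^ (1 - α) := by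
  induction k with
  | zero =>
    intro P K α z hP hK h0 h1 hz hu
    rcases le_total z 1 with h | h
    · exact base_small hP hK.1 h0 h1 hz h (by simpa using hu)
    · exact base_large hP hK.1 h0 h1 h
  | succ k ih =>
    intro P K α z hP hK h0 h1 hz hu
    have hL : (mpow K (1/2)).PosSemidef := mpow_psd hK (by norm_num)
    have hLL := mpow_half hK
    set L := mpow K (1/2) with hLdef
    have hN : ((L * P) * (P * L)).PosSemidef := psd_sandwich hL.1 hP
    have hR := mpow_herm hN.1 (1/2)
    have hRR := mpow_half hN
    set R := mpow ((L * P) * (P * L)) (1/2) with hRdef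
    -- intermediate exponent
    set β : ℝ := (1 + α) / 2 with hβ
    have hβ0 : 0 < β := by linarith
    have hβ1 : β < 1 := by linarith
    have hαβ : α < β := by linarith
    have hb : 1 - β = (1 - α) / 2 := by rw [hβ]; ring
    have hne : (1 - α) ≠ 0 := by linarith
    have q1 : z / (1 - β) = 2 * (z / (1 - α)) := by rw [hb]; field_simp
    have q2 : z / β / (1 - α / β) = 2 * (z / (1 - α)) := by
      have : 1 - α / β = ((1 - α) / 2) / β := by
        rw [← hb]; field_simp; rw [hβ]; ring
      rw [this]; field_simp
    have q3 : z / β / (α / β) = z / α := by field_simp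
    have i1 := ih R L β z hR hL hβ0 hβ1 hz (by rw [q1]; rw [pow_succ] at hu; linarith)
    have i2 := ih P L (α / β) (z / β) hP hL (by positivity) ((div_lt_one hβ0).2 hαβ)
      (by positivity) (by rw [q2]; rw [pow_succ] at hu; linarith)
    have e1 : L * R * (R * L) = K * P * (P * K) := by
      calc L * R * (R * L) = L * (R * R) * L := by simp only [Matrix.mul_assoc]
        _ = (L * L) * P * (P * (L * L)) := by rw [hRR]; simp only [Matrix.mul_assoc]
        _ = _ := by rw [hLL]
    rw [e1, hRR, hLL, q1] at i1
    rw [hLL, q2, q3] at i2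
    rw [F_sq hK]
    have n1 := F_nonneg (psd_sq hP) (z / α)
    have n2 := F_nonneg hK (2 * (z / (1 - α)))
    have i3 := Real.rpow_le_rpow (F_nonneg hN _) i2 hβ0.le
    refine i1.trans ((mul_le_mul_of_nonneg_right i3 (Real.rpow_nonneg n2 _)).trans ?_)
    rw [Real.mul_rpow (Real.rpow_nonneg n1 _) (Real.rpow_nonneg n2 _), ← Real.rpow_mul n1,
      ← Real.rpow_mul n2, mul_assoc, ← Real.rpow_add_of_nonneg n2
        (mul_nonneg (sub_nonneg.2 ((div_lt_one hβ0).2 hαβ).le) hβ0.le) (by linarith)]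
    apply le_of_eq
    congr 2
    · field_simp
    · rw [sub_mul, div_mul_cancel₀ _ hβ0.ne']; ring

end AZ

/-- Strict positivity bound: for `0 < α < 1` and `z > 0`,
`Q_{α,z}(ρ‖σ) ≤ (Tr ρ)^α (Tr σ)^{1−α}`. -/
theorem Qaz_le_trace_rpow (n : ℕ) (α z : ℝ) (hα0 : 0 < α) (hα1 : α < 1) (hz : 0 < z)
    (ρ σ : Matrix (Fin n) (Fin n) ℂ) (hρ : ρ.PosSemidef) (hσ : σ.PosSemidef) :
    Qaz α z ρ σ ≤ (ρ.trace.re) ^ α * (σ.trace.re) ^ (1 - α) := by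
  have hne : 1 - α ≠ 0 := by linarith
  have h1α : 0 < 1 - α := by linarith
  have hs : 0 < (1 - α) / (2 * z) := by positivity
  have ht : 0 < α / (2 * z) := by positivity
  have hu : 0 < z / (1 - α) := by positivity
  obtain ⟨k, hk⟩ := pow_unbounded_of_one_lt (1 / (z / (1 - α))) (one_lt_two (α := ℝ))
  have hk' : 1 ≤ 2 ^ k * (z / (1 - α)) := by
    rw [div_lt_iff₀ hu] at hk
    exact hk.le
  have main := AZ.holder_ind k (mpow ρ (α / (2 * z))) (mpow σ ((1 - α) / (2 * z))) α z
    (AZ.mpow_herm hρ.1 _) (AZ.mpow_psd hσ hs) hα0 hα1 hz hk'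
  have e1 : mpow ρ (α / (2 * z)) * mpow ρ (α / (2 * z)) = mpow ρ (α / z) := by
    rw [AZ.mpow_mul hρ ht ht]; congr 1; field_simp; norm_num
  have e2 : mpow σ ((1 - α) / (2 * z)) * mpow σ ((1 - α) / (2 * z)) = mpow σ ((1 - α) / z) := by
    rw [AZ.mpow_mul hσ hs hs]; congr 1; field_simp; norm_num
  rw [Matrix.mul_assoc, ← Matrix.mul_assoc (mpow ρ _), e1, e2, AZ.F_mpow hρ, AZ.F_mpow hσ,
    ← Matrix.mul_assoc, show α / z * (z / α) = 1 by field_simp,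
    show (1 - α) / z * (z / (1 - α)) = 1 by field_simp, AZ.F_one hρ, AZ.F_one hσ] at main
  exact main
end

section
/- Let 0 < α < 1 and z ≥ 1/2, and let ρ, σ be nonzero n×n positive semidefinite complex matrices. Then Q_{α,z}(ρ‖σ) = (Tr ρ)^α · (Tr σ)^{1−α} holds if and only if (Tr σ) · ρ = (Tr ρ) · σ, i.e., the normalized matrices ρ/Tr ρ and σ/Tr σ coincide. -/
open Matrix
open scoped ComplexOrder

lemma unit_row {n : Type*} [Fintype n] [DecidableEq n] (A : Matrix n n ℂ) (hA : A * Aᴴ = 1) (k : n) :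
    ∑ i, ‖A k i‖ ^ 2 = 1 := by
  have h := congrFun (congrFun hA k) k
  simp only [mul_apply, conjTranspose_apply, one_apply_eq, Complex.star_def, Complex.mul_conj] at h
  have h2 : ((∑ i, ‖A k i‖ ^ 2 : ℝ) : ℂ) = 1 := by
    rw [← h]; push_cast
    exact Finset.sum_congr rfl fun i _ => by rw [← Complex.ofReal_pow, Complex.normSq_eq_norm_sq]
  exact_mod_cast h2

lemma diag_row {n : Type*} [Fintype n] [DecidableEq n] (A B : Matrix n n ℂ)
    (hB : B * Bᴴ = 1) (c : n → ℂ) (k : n) :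
    ∑ j, ‖(A * diagonal c * B) k j‖ ^ 2 = ∑ i, ‖c i‖ ^ 2 * ‖A k i‖ ^ 2 := by
  have e1 : (A * diagonal c * B) * (A * diagonal c * B)ᴴ = (A * diagonal c) * (A * diagonal c)ᴴ := by
    rw [conjTranspose_mul (A * diagonal c) B, Matrix.mul_assoc, ← Matrix.mul_assoc B, hB,
      Matrix.one_mul]
  have gen : ∀ G : Matrix n n ℂ, (G * Gᴴ) k k = ((∑ j, ‖G k j‖ ^ 2 : ℝ) : ℂ) := by
    intro G
    simp only [mul_apply, conjTranspose_apply, Complex.star_def, Complex.mul_conj]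
    push_cast
    exact Finset.sum_congr rfl fun i _ => by rw [← Complex.ofReal_pow, Complex.normSq_eq_norm_sq]
  have h := congrFun (congrFun e1 k) k
  rw [gen, gen] at h
  have h' := Complex.ofReal_injective h
  rw [h']
  refine Finset.sum_congr rfl fun i _ => ?_
  rw [mul_diagonal, norm_mul]; ring

lemma diag_row_le {n : Type*} [Fintype n] [DecidableEq n] (A B : Matrix n n ℂ) (hA : A * Aᴴ = 1)
    (hB : B * Bᴴ = 1) (c : n → ℂ) (hc : ∀ i, ‖c i‖ ≤ 1) (k : n) :
    ∑ j, ‖(A * diagonal c * B) k j‖ ^ 2 ≤ 1 := by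
  rw [diag_row A B hB, ← unit_row A hA k]
  refine Finset.sum_le_sum fun i _ => ?_
  have : ‖c i‖ ^ 2 ≤ 1 := pow_le_one₀ (norm_nonneg _) (hc i)
  nlinarith [sq_nonneg ‖A k i‖]

lemma diag_col {n : Type*} [Fintype n] [DecidableEq n] (A B : Matrix n n ℂ) (hA : Aᴴ * A = 1)
    (c : n → ℂ) (j : n) :
    ∑ k, ‖(A * diagonal c * B) k j‖ ^ 2 = ∑ i, ‖c i‖ ^ 2 * ‖B i j‖ ^ 2 := by
  have := diag_row Bᴴ Aᴴ (by simpa using hA) (star c) j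
  have e : Bᴴ * diagonal (star c) * Aᴴ = (A * diagonal c * B)ᴴ := by
    simp [conjTranspose_mul, diagonal_conjTranspose, Matrix.mul_assoc]
  rw [e] at this
  simpa [conjTranspose_apply] using this

lemma diag_col_le {n : Type*} [Fintype n] [DecidableEq n] (A B : Matrix n n ℂ) (hA : Aᴴ * A = 1)
    (hB : Bᴴ * B = 1) (c : n → ℂ) (hc : ∀ i, ‖c i‖ ≤ 1) (j : n) :
    ∑ k, ‖(A * diagonal c * B) k j‖ ^ 2 ≤ 1 := by
  have := diag_row_le Bᴴ Aᴴ (by simpa using hB) (by simpa using hA) (star c) (by simpa using hc) j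
  have e : Bᴴ * diagonal (star c) * Aᴴ = (A * diagonal c * B)ᴴ := by
    simp [conjTranspose_mul, diagonal_conjTranspose, Matrix.mul_assoc]
  rw [e] at this
  simpa [conjTranspose_apply] using this

/-- Young's inequality in the form used. -/
lemma young_h (p : ℝ) (hp : 1 ≤ p) (m s : ℝ) (hm : 0 ≤ m) (hs : 0 ≤ s) :
    m ^ (p - 1) * s ^ (1 / p) ≤ (1 - 1 / p) * m ^ p + 1 / p * s := by
  have hp0 : 0 < p := by linarith
  have h1 : 1 / p ≤ 1 := by rw [div_le_one hp0]; exact hp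
  have := Real.geom_mean_le_arith_mean2_weighted (w₁ := 1 - 1 / p) (w₂ := 1 / p)
    (p₁ := m ^ p) (p₂ := s) (by linarith) (by positivity) (by positivity) hs (by ring)
  rw [← Real.rpow_mul hm] at this
  have e : p * (1 - 1 / p) = p - 1 := by field_simp
  rwa [e] at this

/-- Bound for substochastic weights. -/
lemma stoch_le {n : Type*} [Fintype n] (p : ℝ) (hp : 1 ≤ p) (m s : n → ℝ)
    (hm : ∀ k, 0 ≤ m k) (hs : ∀ j, 0 ≤ s j) (hm1 : ∑ k, m k ^ p = 1) (hs1 : ∑ j, s j = 1)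
    (D : n → n → ℝ) (hD : ∀ k j, 0 ≤ D k j) (hr : ∀ k, ∑ j, D k j ≤ 1)
    (hc : ∀ j, ∑ k, D k j ≤ 1) :
    ∑ k, ∑ j, ((1 - 1 / p) * m k ^ p + 1 / p * s j) * D k j ≤ 1 := by
  have hp0 : 0 < p := by linarith
  have h1 : 1 / p ≤ 1 := by rw [div_le_one hp0]; exact hp
  have e : ∑ k, ∑ j, ((1 - 1 / p) * m k ^ p + 1 / p * s j) * D k j
      = (1 - 1 / p) * ∑ k, m k ^ p * ∑ j, D k j + 1 / p * ∑ j, s j * ∑ k, D k j := by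
    simp only [Finset.mul_sum, add_mul, Finset.sum_add_distrib]
    congr 1
    · exact Finset.sum_congr rfl fun k _ => Finset.sum_congr rfl fun j _ => by ring
    · rw [Finset.sum_comm]
      exact Finset.sum_congr rfl fun k _ => Finset.sum_congr rfl fun j _ => by ring
  have a1 : ∑ k, m k ^ p * ∑ j, D k j ≤ 1 := by
    rw [← hm1]
    refine Finset.sum_le_sum fun k _ => ?_
    have : 0 ≤ m k ^ p := Real.rpow_nonneg (hm k) _
    nlinarith [hr k]
  have a2 : ∑ j, s j * ∑ k, D k j ≤ 1 := by
    rw [← hs1]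
    refine Finset.sum_le_sum fun k _ => ?_
    nlinarith [hc k, hs k]
  rw [e]
  have : 0 < 1 / p := by positivity
  nlinarith

lemma bdry {n : Type*} [Fintype n] (p : ℝ) (hp : 1 ≤ p) (m s : n → ℝ)
    (hm : ∀ k, 0 ≤ m k) (hs : ∀ j, 0 ≤ s j) (hm1 : ∑ k, m k ^ p = 1) (hs1 : ∑ j, s j = 1)
    (G C : Matrix n n ℂ) (d : n → ℂ) (hd : ∀ j, ‖d j‖ ≤ s j ^ (1 / p))
    (hG1 : ∀ k, ∑ j, ‖G k j‖ ^ 2 ≤ 1) (hG2 : ∀ j, ∑ k, ‖G k j‖ ^ 2 ≤ 1)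
    (hC1 : ∀ k, ∑ j, ‖C k j‖ ^ 2 ≤ 1) (hC2 : ∀ j, ∑ k, ‖C k j‖ ^ 2 ≤ 1) :
    ‖∑ k, ∑ j, ((m k ^ (p - 1) : ℝ) : ℂ) * (G k j * d j * C j k)‖ ≤ 1 := by
  refine le_trans ?_ (stoch_le p hp m s hm hs hm1 hs1
    (fun k j => (‖G k j‖ ^ 2 + ‖C j k‖ ^ 2) / 2) (fun k j => by positivity) ?_ ?_)
  · refine (norm_sum_le _ _).trans (Finset.sum_le_sum fun k _ => ?_)
    refine (norm_sum_le _ _).trans (Finset.sum_le_sum fun j _ => ?_)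
    have hh : 0 ≤ m k ^ (p - 1) := Real.rpow_nonneg (hm k) _
    rw [norm_mul, norm_mul, norm_mul, Complex.norm_real, Real.norm_of_nonneg hh]
    calc m k ^ (p - 1) * (‖G k j‖ * ‖d j‖ * ‖C j k‖)
        = (m k ^ (p - 1) * ‖d j‖) * (‖G k j‖ * ‖C j k‖) := by ring
      _ ≤ (m k ^ (p - 1) * s j ^ (1 / p)) * (‖G k j‖ * ‖C j k‖) := by
          gcongr; exact hd j
      _ ≤ (m k ^ (p - 1) * s j ^ (1 / p)) * ((‖G k j‖ ^ 2 + ‖C j k‖ ^ 2) / 2) := by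
          have := Real.rpow_nonneg (hs j) (1 / p)
          gcongr
          nlinarith [sq_nonneg (‖G k j‖ - ‖C j k‖)]
      _ ≤ _ := by
          gcongr
          exact young_h p hp _ _ (hm k) (hs j)
  · intro k
    rw [← Finset.sum_div, Finset.sum_add_distrib]
    linarith [hG1 k, hC2 k]
  · intro j
    rw [← Finset.sum_div, Finset.sum_add_distrib]
    linarith [hG2 j, hC1 j]

/-- analytic family of powers -/
noncomputable def epow (q r : ℝ) (ζ : ℂ) : ℂ :=
  if r = 0 then 0 else Complex.exp (ζ * ((q * Real.log r : ℝ) : ℂ))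

lemma epow_diff (q r : ℝ) : Differentiable ℂ (epow q r) := by
  unfold epow
  split_ifs <;> fun_prop

lemma epow_norm_le (q r : ℝ) (hr : 0 ≤ r) (ζ : ℂ) : ‖epow q r ζ‖ ≤ r ^ (q * ζ.re) := by
  unfold epow
  split_ifs with h
  · simpa using Real.rpow_nonneg hr _
  · rw [Complex.norm_exp, Real.rpow_def_of_pos (lt_of_le_of_ne hr (Ne.symm h))]
    apply le_of_eq
    rw [Complex.re_mul_ofReal]; congr 1; ring

lemma epow_real (q r x : ℝ) (hr : 0 ≤ r) (hq : 0 < q) (hx : 0 < x) :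
    epow q r (x : ℂ) = ((r ^ (q * x) : ℝ) : ℂ) := by
  unfold epow
  split_ifs with h
  · subst h; rw [Real.zero_rpow (by positivity)]; simp
  · rw [Real.rpow_def_of_pos (lt_of_le_of_ne hr (Ne.symm h))]
    push_cast; congr 1; ring

/-- Three-lines step. -/
lemma three_lines {n : Type*} [Fintype n] [DecidableEq n] (p : ℝ) (hp : 1 ≤ p) (α : ℝ)
    (hα0 : 0 < α) (hα1 : α < 1) (m r s : n → ℝ)
    (hm : ∀ k, 0 ≤ m k) (hr : ∀ j, 0 ≤ r j) (hs : ∀ j, 0 ≤ s j)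
    (hm1 : ∑ k, m k ^ p = 1) (hr1 : ∑ j, r j = 1) (hs1 : ∑ j, s j = 1)
    (A B C : Matrix n n ℂ) (hA : A * Aᴴ = 1) (hB : B * Bᴴ = 1) (hC : C * Cᴴ = 1)
    (h : A * diagonal (fun i => ((r i ^ (1 / p * α) : ℝ) : ℂ)) * B *
      diagonal (fun j => ((s j ^ (1 / p * (1 - α)) : ℝ) : ℂ)) * C = diagonal (fun k => (m k : ℂ))) :
    ∑ k, ((m k ^ (p - 1) : ℝ) : ℂ) * (A * diagonal (fun i => ((r i ^ (1 / p * (1 / 2)) : ℝ) : ℂ)) * B *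
      diagonal (fun j => ((s j ^ (1 / p * (1 / 2)) : ℝ) : ℂ)) * C) k k = 1 := by
  have hp0 : 0 < p := by linarith
  have hA' := mul_eq_one_comm.mp hA
  have hB' := mul_eq_one_comm.mp hB
  have hC' := mul_eq_one_comm.mp hC
  have hr' : ∀ i, r i ≤ 1 := fun i => by
    rw [← hr1]; exact Finset.single_le_sum (fun j _ => hr j) (Finset.mem_univ i)
  have hs' : ∀ i, s i ≤ 1 := fun i => by
    rw [← hs1]; exact Finset.single_le_sum (fun j _ => hs j) (Finset.mem_univ i)
  set f : ℂ → ℂ := fun ζ => ∑ k, ((m k ^ (p - 1) : ℝ) : ℂ) *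
    (A * diagonal (fun i => epow (1 / p) (r i) ζ) * B *
      diagonal (fun j => epow (1 / p) (s j) (1 - ζ)) * C) k k with hf
  have hcr : ∀ ζ : ℂ, 0 ≤ ζ.re → ∀ i, ‖epow (1 / p) (r i) ζ‖ ≤ 1 := fun ζ hζ i =>
    (epow_norm_le _ _ (hr i) ζ).trans (Real.rpow_le_one (hr i) (hr' i) (by positivity))
  have hcs : ∀ ζ : ℂ, ζ.re ≤ 1 → ∀ i, ‖epow (1 / p) (s i) (1 - ζ)‖ ≤ 1 := fun ζ hζ i =>
    (epow_norm_le _ _ (hs i) _).trans (Real.rpow_le_one (hs i) (hs' i) (by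
      have : 0 ≤ (1 - ζ).re := by simpa using hζ
      positivity))
  have hdiff : Differentiable ℂ f := by
    have e1 : ∀ q r, Differentiable ℂ (epow q r) := epow_diff
    have e2 : ∀ q r, Differentiable ℂ (fun ζ => epow q r (1 - ζ)) := fun q r =>
      (epow_diff q r).comp (by fun_prop)
    simp only [hf, mul_apply (N := C), mul_diagonal, mul_apply (N := B)]
    fun_prop
  have hval : ∀ x : ℝ, 0 < x → x < 1 → f x = ∑ k, ((m k ^ (p - 1) : ℝ) : ℂ) *
      (A * diagonal (fun i => ((r i ^ (1 / p * x) : ℝ) : ℂ)) * B *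
      diagonal (fun j => ((s j ^ (1 / p * (1 - x)) : ℝ) : ℂ)) * C) k k := by
    intro x hx0 hx1
    have a1 : (fun i => epow (1 / p) (r i) (x : ℂ)) = fun i => ((r i ^ (1 / p * x) : ℝ) : ℂ) :=
      funext fun i => epow_real _ _ _ (hr i) (by positivity) hx0
    have a2 : (fun i => epow (1 / p) (s i) (1 - (x : ℂ))) =
        fun i => ((s i ^ (1 / p * (1 - x)) : ℝ) : ℂ) :=
      funext fun i => by
        have := epow_real (1 / p) (s i) (1 - x) (hs i) (by positivity) (by linarith)
        push_cast at this ⊢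
        exact this
    simp only [hf, a1, a2]
  have hfα : f α = 1 := by
    rw [hval α hα0 hα1, h]
    have : ∀ k, ((m k ^ (p - 1) : ℝ) : ℂ) * diagonal (fun k => (m k : ℂ)) k k
        = ((m k ^ p : ℝ) : ℂ) := by
      intro k
      rw [diagonal_apply_eq, ← Complex.ofReal_mul]
      congr 1
      rcases (hm k).eq_or_lt with h0 | h0
      · rw [← h0, Real.zero_rpow hp0.ne', mul_zero]
      · rw [Real.rpow_sub_one h0.ne']; field_simp
    rw [Finset.sum_congr rfl fun k _ => this k, ← Complex.ofReal_sum, hm1]; simp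
  have hbd0 : ∀ ζ : ℂ, ζ.re = 0 → ‖f ζ‖ ≤ 1 := by
    intro ζ hζ
    have := bdry p hp m s hm hs hm1 hs1 (A * diagonal (fun i => epow (1 / p) (r i) ζ) * B) C
      (fun j => epow (1 / p) (s j) (1 - ζ))
      (fun j => by
        have := epow_norm_le (1 / p) (s j) (hs j) (1 - ζ)
        simpa [hζ] using this)
      (diag_row_le A B hA hB _ (hcr ζ hζ.ge)) (diag_col_le A B hA' hB' _ (hcr ζ hζ.ge))
      (fun k => (unit_row C hC k).le)
      (fun j => by simpa using (unit_row Cᴴ (by simpa using hC') j).le)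
    convert this using 2
    refine Finset.sum_congr rfl fun k _ => ?_
    rw [mul_apply (N := C), Finset.mul_sum]
    simp only [mul_diagonal]
  have hbd1 : ∀ ζ : ℂ, ζ.re = 1 → ‖f ζ‖ ≤ 1 := by
    intro ζ hζ
    have := bdry p hp m r hm hr hm1 hr1 A (B * diagonal (fun i => epow (1 / p) (s i) (1 - ζ)) * C)
      (fun j => epow (1 / p) (r j) ζ)
      (fun j => by
        have := epow_norm_le (1 / p) (r j) (hr j) ζ
        simpa [hζ] using this)
      (fun k => (unit_row A hA k).le)
      (fun j => by simpa using (unit_row Aᴴ (by simpa using hA') j).le)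
      (diag_row_le B C hB hC _ (hcs ζ hζ.le)) (diag_col_le B C hB' hC' _ (hcs ζ hζ.le))
    convert this using 2
    refine Finset.sum_congr rfl fun k _ => ?_
    rw [← Finset.mul_sum, Matrix.mul_assoc _ B, Matrix.mul_assoc _ _ C,
      mul_apply (N := B * _ * C)]
    simp only [mul_diagonal]
  have hbdd : BddAbove ((norm ∘ f) '' Complex.HadamardThreeLines.verticalClosedStrip 0 1) := by
    refine ⟨∑ k, ‖((m k ^ (p - 1) : ℝ) : ℂ)‖ * ∑ j, (∑ i, ‖A k i‖ * 1 * ‖B i j‖) * 1 * ‖C j k‖, ?_⟩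
    rintro _ ⟨ζ, ⟨hz0, hz1⟩, rfl⟩
    simp only [Function.comp, hf]
    refine (norm_sum_le _ _).trans (Finset.sum_le_sum fun k _ => ?_)
    rw [norm_mul]
    gcongr
    rw [mul_apply]
    refine (norm_sum_le _ _).trans (Finset.sum_le_sum fun j _ => ?_)
    rw [norm_mul, mul_diagonal, norm_mul]
    gcongr
    · rw [mul_apply]
      refine (norm_sum_le _ _).trans (Finset.sum_le_sum fun i _ => ?_)
      rw [norm_mul, mul_diagonal, norm_mul]
      gcongr
      exact hcr ζ hz0 i
    · exact hcs ζ hz1 j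
  have hle : ∀ ζ ∈ Complex.HadamardThreeLines.verticalStrip 0 1, ‖f ζ‖ ≤ 1 := by
    intro ζ hζ
    have := Complex.HadamardThreeLines.norm_le_interp_of_mem_verticalClosedStrip' (f := f)
      (z := ζ) (a := 1) (b := 1) zero_lt_one
      ⟨hζ.1.le, hζ.2.le⟩ hdiff.diffContOnCl hbdd (fun z hz => hbd0 z hz) (fun z hz => hbd1 z hz)
    simpa using this
  have hopen : IsOpen (Complex.HadamardThreeLines.verticalStrip 0 1) :=
    isOpen_Ioo.preimage Complex.continuous_re
  have hconn : IsPreconnected (Complex.HadamardThreeLines.verticalStrip 0 1) :=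
    ((convex_Ioo (0 : ℝ) 1).linear_preimage Complex.reLm).isPreconnected
  have hEq := Complex.eqOn_of_isPreconnected_of_isMaxOn_norm (f := f) (c := (α : ℂ)) hconn hopen
    hdiff.differentiableOn ⟨by simpa using hα0, by simpa using hα1⟩
    (fun ζ hζ => by
      change ‖f ζ‖ ≤ ‖f α‖
      rw [hfα]; simpa using hle ζ hζ)
  have h12 : f ((1 / 2 : ℝ) : ℂ) = 1 := by
    have := @hEq ((1 / 2 : ℝ) : ℂ) ⟨by rw [Complex.ofReal_re]; norm_num, by rw [Complex.ofReal_re]; norm_num⟩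
    rw [this]; exact hfα
  rw [hval _ (by norm_num) (by norm_num)] at h12
  rw [show (1 : ℝ) - 1 / 2 = 1 / 2 by norm_num] at h12
  exact h12

lemma stoch_eq {n : Type*} [Fintype n] (p : ℝ) (hp : 1 ≤ p) (m s : n → ℝ)
    (hm : ∀ k, 0 ≤ m k) (hs : ∀ j, 0 ≤ s j) (hm1 : ∑ k, m k ^ p = 1) (hs1 : ∑ j, s j = 1)
    (D : n → n → ℝ) (hD : ∀ k j, 0 ≤ D k j) (hr : ∀ k, ∑ j, D k j ≤ 1)
    (hc : ∀ j, ∑ k, D k j ≤ 1) :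
    ∑ k, ∑ j, m k ^ (p - 1) * (s j ^ (1 / p) * D k j) ≤ 1 ∧
    (∑ k, ∑ j, m k ^ (p - 1) * (s j ^ (1 / p) * D k j) = 1 →
      ∀ k j, m k ^ (p - 1) = 0 → s j * D k j = 0) := by
  have hp0 : 0 < p := by linarith
  have h1 : 1 / p ≤ 1 := by rw [div_le_one hp0]; exact hp
  have hub := stoch_le p hp m s hm hs hm1 hs1 D hD hr hc
  have hterm : ∀ k j, m k ^ (p - 1) * (s j ^ (1 / p) * D k j) ≤
      ((1 - 1 / p) * m k ^ p + 1 / p * s j) * D k j := by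
    intro k j
    rw [← mul_assoc]
    exact mul_le_mul_of_nonneg_right (young_h p hp _ _ (hm k) (hs j)) (hD k j)
  have hle : ∑ k, ∑ j, m k ^ (p - 1) * (s j ^ (1 / p) * D k j) ≤
      ∑ k, ∑ j, ((1 - 1 / p) * m k ^ p + 1 / p * s j) * D k j :=
    Finset.sum_le_sum fun k _ => Finset.sum_le_sum fun j _ => hterm k j
  refine ⟨hle.trans hub, fun heq k j hk => ?_⟩
  have heq2 : ∑ k, ∑ j, m k ^ (p - 1) * (s j ^ (1 / p) * D k j) =
      ∑ k, ∑ j, ((1 - 1 / p) * m k ^ p + 1 / p * s j) * D k j :=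
    le_antisymm hle (by rw [heq]; exact hub)
  have e1 := (Finset.sum_eq_sum_iff_of_le
    (fun k _ => Finset.sum_le_sum fun j _ => hterm k j)).mp heq2 k (Finset.mem_univ k)
  have e2 := (Finset.sum_eq_sum_iff_of_le (fun j _ => hterm k j)).mp e1 j (Finset.mem_univ j)
  rw [hk, zero_mul] at e2
  have a1 : 0 ≤ (1 - 1 / p) * m k ^ p * D k j :=
    mul_nonneg (mul_nonneg (by linarith) (Real.rpow_nonneg (hm k) _)) (hD k j)
  have a2 : 0 ≤ s j * D k j := mul_nonneg (hs j) (hD k j)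
  have a3 : 1 / p * (s j * D k j) ≤ 0 := by nlinarith
  have a4 : 0 < 1 / p := by positivity
  nlinarith

lemma half_sq (r p : ℝ) (hr : 0 ≤ r) :
    (r ^ (1 / p * (1 / 2))) ^ 2 = r ^ (1 / p) := by
  rw [← Real.rpow_natCast, ← Real.rpow_mul hr]; congr 1; push_cast; ring

lemma core {n : Type*} [Fintype n] [DecidableEq n] (p : ℝ) (hp : 1 ≤ p) (α : ℝ)
    (hα0 : 0 < α) (hα1 : α < 1) (m r s : n → ℝ)
    (hm : ∀ k, 0 ≤ m k) (hr : ∀ j, 0 ≤ r j) (hs : ∀ j, 0 ≤ s j)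
    (hm1 : ∑ k, m k ^ p = 1) (hr1 : ∑ j, r j = 1) (hs1 : ∑ j, s j = 1)
    (A B C : Matrix n n ℂ) (hA : A * Aᴴ = 1) (hB : B * Bᴴ = 1) (hC : C * Cᴴ = 1)
    (h : A * diagonal (fun i => ((r i ^ (1 / p * α) : ℝ) : ℂ)) * B *
      diagonal (fun j => ((s j ^ (1 / p * (1 - α)) : ℝ) : ℂ)) * C = diagonal (fun k => (m k : ℂ))) :
    diagonal (fun i => (r i : ℂ)) * B = B * diagonal (fun i => (s i : ℂ)) := by
  have hp0 : 0 < p := by linarith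
  have hA' := mul_eq_one_comm.mp hA
  have hB' := mul_eq_one_comm.mp hB
  have hC' := mul_eq_one_comm.mp hC
  have key := three_lines p hp α hα0 hα1 m r s hm hr hs hm1 hr1 hs1 A B C hA hB hC h
  set R : n → ℂ := fun i => ((r i ^ (1 / p * (1 / 2)) : ℝ) : ℂ) with hR
  set S : n → ℂ := fun i => ((s i ^ (1 / p * (1 / 2)) : ℝ) : ℂ) with hS
  have hRn : ∀ i, ‖R i‖ ^ 2 = r i ^ (1 / p) := fun i => by
    rw [hR, Complex.norm_real, Real.norm_eq_abs, sq_abs, half_sq _ _ (hr i)]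
  have hSn : ∀ i, ‖S i‖ ^ 2 = s i ^ (1 / p) := fun i => by
    rw [hS, Complex.norm_real, Real.norm_eq_abs, sq_abs, half_sq _ _ (hs i)]
  set X := A * diagonal R with hX
  set Y := B * diagonal S * C with hY
  have hXn : ∀ k i, ‖X k i‖ ^ 2 = r i ^ (1 / p) * ‖A k i‖ ^ 2 := fun k i => by
    rw [hX, mul_diagonal, norm_mul, mul_pow, hRn]; ring
  have hYn : ∀ k, ∑ i, ‖Y i k‖ ^ 2 = ∑ j, s j ^ (1 / p) * ‖C j k‖ ^ 2 := fun k => by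
    rw [hY, diag_col B C hB']
    exact Finset.sum_congr rfl fun j _ => by rw [hSn]
  have hAcol : ∀ j, ∑ k, ‖A k j‖ ^ 2 = 1 := fun j => by
    simpa using unit_row Aᴴ (by simpa using hA') j
  have hCcol : ∀ j, ∑ k, ‖C k j‖ ^ 2 = 1 := fun j => by
    simpa using unit_row Cᴴ (by simpa using hC') j
  obtain ⟨b1, c1⟩ := stoch_eq p hp m r hm hr hm1 hr1 (fun k i => ‖A k i‖ ^ 2)
    (fun _ _ => by positivity) (fun k => (unit_row A hA k).le) (fun j => (hAcol j).le)
  obtain ⟨b2, c2⟩ := stoch_eq p hp m s hm hs hm1 hs1 (fun k j => ‖C j k‖ ^ 2)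
    (fun _ _ => by positivity) (fun k => (hCcol k).le) (fun j => (unit_row C hC j).le)
  have hXY : ∀ k, ((X * Y) k k).re = (∑ i, r i ^ (1 / p) * ‖A k i‖ ^ 2) / 2 +
      (∑ j, s j ^ (1 / p) * ‖C j k‖ ^ 2) / 2 - (∑ i, ‖star (X k i) - Y i k‖ ^ 2) / 2 := by
    intro k
    rw [← hYn, mul_apply, Complex.re_sum]
    rw [Finset.sum_div, Finset.sum_div, Finset.sum_div, ← Finset.sum_add_distrib,
      ← Finset.sum_sub_distrib]
    refine Finset.sum_congr rfl fun i _ => ?_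
    rw [← hXn]
    simp only [← Complex.normSq_eq_norm_sq, Complex.normSq_apply, Complex.star_def,
      Complex.sub_re, Complex.sub_im, Complex.conj_re, Complex.conj_im, Complex.mul_re]
    ring
  have key2 : ∑ k, m k ^ (p - 1) * ((X * Y) k k).re = 1 := by
    have := congrArg Complex.re key
    rw [Complex.re_sum] at this
    simp only [Complex.re_ofReal_mul, Complex.one_re] at this
    refine Eq.trans ?_ this
    simp only [hX, hY, Matrix.mul_assoc]
  simp only [hXY, mul_sub, mul_add, mul_div_assoc', Finset.sum_sub_distrib, Finset.sum_add_distrib,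
    ← Finset.sum_div] at key2
  simp only [← Finset.mul_sum] at b1 b2 c1 c2
  have hh : ∀ k, 0 ≤ m k ^ (p - 1) := fun k => Real.rpow_nonneg (hm k) _
  have hnn : ∀ k, 0 ≤ m k ^ (p - 1) * ∑ i, ‖star (X k i) - Y i k‖ ^ 2 := fun k =>
    mul_nonneg (hh k) (Finset.sum_nonneg fun i _ => by positivity)
  have hnn2 := Finset.sum_nonneg fun k (_ : k ∈ Finset.univ) => hnn k
  have z1 := c1 (by linarith)
  have z2 := c2 (by linarith)
  have z3 : ∑ k, m k ^ (p - 1) * ∑ i, ‖star (X k i) - Y i k‖ ^ 2 = 0 := by linarith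
  have z4 := (Finset.sum_eq_zero_iff_of_nonneg (fun k _ => hnn k)).mp z3
  have hXHY : Xᴴ = Y := by
    ext i k
    rw [conjTranspose_apply]
    by_cases hk : m k ^ (p - 1) = 0
    · have x0 : X k i = 0 := by
        have := hXn k i
        rcases mul_eq_zero.mp (z1 k i hk) with h0 | h0
        · rw [h0, Real.zero_rpow (by positivity), zero_mul] at this
          simpa using this
        · rw [h0, mul_zero] at this
          simpa using this
      have y0 : ∑ i, ‖Y i k‖ ^ 2 = 0 := by
        rw [hYn]
        refine Finset.sum_eq_zero fun j _ => ?_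
        rcases mul_eq_zero.mp (z2 k j hk) with h0 | h0
        · rw [h0, Real.zero_rpow (by positivity), zero_mul]
        · rw [h0, mul_zero]
      have y1 := (Finset.sum_eq_zero_iff_of_nonneg (fun i _ => by positivity)).mp y0 i
        (Finset.mem_univ i)
      have y2 : Y i k = 0 := by simpa using y1
      rw [x0, y2, star_zero]
    · have := (mul_eq_zero.mp (z4 k (Finset.mem_univ k))).resolve_left hk
      have y1 := (Finset.sum_eq_zero_iff_of_nonneg (fun i _ => by positivity)).mp this i
        (Finset.mem_univ i)
      have y2 : star (X k i) - Y i k = 0 := by simpa using y1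
      exact sub_eq_zero.mp y2
  have sR : star R = R := by ext i; simp [hR]
  have sS : star S = S := by ext i; simp [hS]
  have e1 : Xᴴ * X = diagonal R * diagonal R := by
    rw [hX, conjTranspose_mul, diagonal_conjTranspose, sR, Matrix.mul_assoc, ← Matrix.mul_assoc Aᴴ,
      hA', Matrix.one_mul]
  have e2 : Y * Yᴴ = B * (diagonal S * diagonal S) * Bᴴ := by
    rw [hY, conjTranspose_mul, conjTranspose_mul, diagonal_conjTranspose, sS, Matrix.mul_assoc,
      ← Matrix.mul_assoc C, hC, Matrix.one_mul]
    simp only [Matrix.mul_assoc]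
  have e3 : diagonal R * diagonal R = B * (diagonal S * diagonal S) * Bᴴ := by
    rw [← e1, ← e2, ← hXHY, conjTranspose_conjTranspose]
  have e4 : diagonal R * diagonal R * B = B * (diagonal S * diagonal S) := by
    rw [e3, Matrix.mul_assoc, hB', Matrix.mul_one]
  ext i j
  have e5 := congrFun (congrFun e4 i) j
  rw [diagonal_mul_diagonal, diagonal_mul_diagonal, diagonal_mul, mul_diagonal] at e5
  rw [diagonal_mul, mul_diagonal]
  by_cases hb : B i j = 0
  · simp [hb]
  have e6 : R i * R i = S j * S j := by
    apply mul_right_cancel₀ hb; rw [e5]; ring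
  have e7 : r i ^ (1 / p) = s j ^ (1 / p) := by
    rw [← half_sq _ _ (hr i), ← half_sq _ _ (hs j), sq, sq]
    simp only [hR, hS] at e6
    exact_mod_cast e6
  have e8 : r i = s j := (Real.rpow_left_inj (hr i) (hs j) (by positivity)).mp e7
  rw [e8]; ring

lemma svd_aux {n : Type*} [Fintype n] [DecidableEq n] (Z : Matrix n n ℂ) (W : Matrix n n ℂ)
    (l : n → ℝ) (hl : ∀ k, 0 ≤ l k)
    (h : (Z * W)ᴴ * (Z * W) = diagonal (fun k => (l k : ℂ))) :
    ∃ V : Matrix n n ℂ, V * Vᴴ = 1 ∧ Vᴴ * Z * W = diagonal (fun k => ((√(l k) : ℝ) : ℂ)) := by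
  set N := Z * W with hN
  let v : n → EuclideanSpace ℂ n := fun k => WithLp.toLp 2 (fun i => ((√(l k))⁻¹ : ℝ) * N i k)
  have hentry : ∀ a b, ∑ i, star (N i a) * N i b = if a = b then (l a : ℂ) else 0 := by
    intro a b
    have := congrFun (congrFun h a) b
    simpa [mul_apply, diagonal_apply] using this
  have hv : Orthonormal ℂ (({k | l k ≠ 0} : Set n).domRestrict v) := by
    rw [orthonormal_iff_ite]
    rintro ⟨a, ha⟩ ⟨b, hb⟩
    have e : inner ℂ (v a) (v b) = (((√(l a))⁻¹ * (√(l b))⁻¹ : ℝ) : ℂ) * ∑ i, star (N i a) * N i b := by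
      simp only [v, PiLp.inner_apply, Finset.mul_sum, RCLike.inner_apply]
      refine Finset.sum_congr rfl fun i _ => ?_
      simp
      ring
    simp only [Set.domRestrict_apply]
    rw [e, hentry]
    by_cases hab : a = b
    · subst hab
      simp only [if_true]
      rw [← Complex.ofReal_mul, ← mul_inv, Real.mul_self_sqrt (hl a), inv_mul_cancel₀ ha]; simp
    · simp [hab]
  obtain ⟨b, hb⟩ := hv.exists_orthonormalBasis_extension_of_card_eq (by simp)
  refine ⟨Matrix.of fun i k => b k i, ?_, ?_⟩
  · rw [mul_eq_one_comm]
    ext i j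
    have := orthonormal_iff_ite.mp b.orthonormal i j
    rw [PiLp.inner_apply] at this
    simp only [mul_apply, conjTranspose_apply, of_apply, one_apply]
    rw [← this]
    refine Finset.sum_congr rfl fun k _ => ?_
    simp [mul_comm]
  · rw [Matrix.mul_assoc, ← hN]
    have hcol : ∀ i k, N i k = ((√(l k) : ℝ) : ℂ) * b k i := by
      intro i k
      by_cases hk : l k = 0
      · have := hentry k k
        simp only [if_true, hk, Complex.ofReal_zero] at this
        have h2 : ∑ i, ‖N i k‖ ^ 2 = 0 := by
          have : ((∑ i, ‖N i k‖ ^ 2 : ℝ) : ℂ) = 0 := by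
            rw [← this]; push_cast
            refine Finset.sum_congr rfl fun i _ => ?_
            rw [Complex.star_def, mul_comm, Complex.mul_conj, Complex.normSq_eq_norm_sq]; simp
          exact_mod_cast this
        have h3 := (Finset.sum_eq_zero_iff_of_nonneg (fun i _ => by positivity)).mp h2 i
          (Finset.mem_univ i)
        simp [hk]; simpa using h3
      · rw [hb k hk]
        have : √(l k) ≠ 0 := by
          rw [Real.sqrt_ne_zero (hl k)]; exact hk
        simp only [v]
        rw [← mul_assoc, ← Complex.ofReal_mul, mul_inv_cancel₀ this]; simp
    ext i j
    have := orthonormal_iff_ite.mp b.orthonormal i j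
    rw [PiLp.inner_apply] at this
    simp only [mul_apply, conjTranspose_apply, of_apply, diagonal_apply, hcol]
    have e : ∑ x, star (b i x) * (((√(l j) : ℝ) : ℂ) * b j x) =
      ((√(l j) : ℝ) : ℂ) * ∑ x, inner ℂ (b i x) (b j x) := by
      rw [Finset.mul_sum]
      refine Finset.sum_congr rfl fun k _ => ?_
      simp; ring
    rw [e, this]
    by_cases hij : i = j <;> simp [hij]

lemma mpow_eq {n : Type*} [Fintype n] [DecidableEq n] {A : Matrix n n ℂ} (hA : A.IsHermitian)
    (t : ℝ) : mpow A t = (hA.eigenvectorUnitary : Matrix n n ℂ) *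
      diagonal (fun i => ((hA.eigenvalues i ^ t : ℝ) : ℂ)) *
      (hA.eigenvectorUnitary : Matrix n n ℂ)ᴴ := by
  rw [mpow, dif_pos hA]; rfl

lemma mpow_eq_cfc {n : Type*} [Fintype n] [DecidableEq n] {A : Matrix n n ℂ} (hA : A.IsHermitian)
    (t : ℝ) : mpow A t = cfc (fun x : ℝ => x ^ t) A := by
  rw [mpow, dif_pos hA, hA.cfc_eq, IsHermitian.cfc, Unitary.conjStarAlgAut_apply]; rfl

lemma eig_unit {n : Type*} [Fintype n] [DecidableEq n] {A : Matrix n n ℂ} (hA : A.IsHermitian) :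
    (hA.eigenvectorUnitary : Matrix n n ℂ) * (hA.eigenvectorUnitary : Matrix n n ℂ)ᴴ = 1 :=
  Unitary.mul_star_self_of_mem hA.eigenvectorUnitary.2

lemma eig_spec {n : Type*} [Fintype n] [DecidableEq n] {A : Matrix n n ℂ} (hA : A.IsHermitian) :
    A = (hA.eigenvectorUnitary : Matrix n n ℂ) *
      diagonal (fun i => ((hA.eigenvalues i : ℝ) : ℂ)) *
      (hA.eigenvectorUnitary : Matrix n n ℂ)ᴴ := by
  conv_lhs => rw [hA.spectral_theorem, Unitary.conjStarAlgAut_apply]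
  rfl

lemma trace_mpow {n : Type*} [Fintype n] [DecidableEq n] {A : Matrix n n ℂ} (hA : A.IsHermitian)
    (t : ℝ) : (mpow A t).trace.re = ∑ i, hA.eigenvalues i ^ t := by
  rw [mpow_eq hA, trace_mul_comm, ← Matrix.mul_assoc, mul_eq_one_comm.mp (eig_unit hA),
    Matrix.one_mul, trace_diagonal, ← Complex.ofReal_sum, Complex.ofReal_re]

lemma trace_re_eig {n : Type*} [Fintype n] [DecidableEq n] {A : Matrix n n ℂ} (hA : A.IsHermitian) :
    A.trace = ((∑ i, hA.eigenvalues i : ℝ) : ℂ) := by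
  rw [hA.trace_eq_sum_eigenvalues]; push_cast; rfl

lemma trace_re_pos {n : Type*} [Fintype n] [DecidableEq n] {A : Matrix n n ℂ} (hA : A.PosSemidef)
    (h0 : A ≠ 0) : 0 < A.trace.re ∧ A.trace = (A.trace.re : ℂ) := by
  have e := trace_re_eig hA.isHermitian
  have e2 : A.trace = (A.trace.re : ℂ) := by rw [e]; simp
  refine ⟨lt_of_le_of_ne ?_ ?_, e2⟩
  · rw [e, Complex.ofReal_re]
    exact Finset.sum_nonneg fun i _ => hA.eigenvalues_nonneg i
  · intro h
    apply h0
    rw [← hA.trace_eq_zero_iff, e2, ← h]; simp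

lemma forward {n : Type*} [Fintype n] [DecidableEq n] (α z : ℝ) (hα0 : 0 < α) (hα1 : α < 1)
    (hz : (1 : ℝ) / 2 ≤ z)
    (ρ σ : Matrix n n ℂ) (hρ : ρ.PosSemidef) (hσ : σ.PosSemidef)
    (hρ0 : ρ ≠ 0) (hσ0 : σ ≠ 0)
    (hQ : Qaz α z ρ σ = (ρ.trace.re) ^ α * (σ.trace.re) ^ (1 - α)) :
      σ.trace • ρ = ρ.trace • σ := by
  have hz0 : 0 < z := by linarith
  obtain ⟨ht, hte⟩ := trace_re_pos hρ hρ0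
  obtain ⟨hu, hue⟩ := trace_re_pos hσ hσ0
  have Hρ := hρ.isHermitian
  have Hσ := hσ.isHermitian
  have ht1 : ρ.trace.re = ∑ i, Hρ.eigenvalues i := by rw [trace_re_eig Hρ, Complex.ofReal_re]
  have hu1 : σ.trace.re = ∑ i, Hσ.eigenvalues i := by rw [trace_re_eig Hσ, Complex.ofReal_re]
  rw [hte, hue]
  set t := ρ.trace.re with htdef
  set u := σ.trace.re with hudef
  clear_value t u
  have hr0 := hρ.eigenvalues_nonneg
  have hs0 := hσ.eigenvalues_nonneg
  have hE := eig_unit Hρ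
  have hF := eig_unit Hσ
  have sρ := eig_spec Hρ
  have sσ := eig_spec Hσ
  have pρ := mpow_eq Hρ (α / z)
  have pσ := mpow_eq Hσ ((1 - α) / (2 * z))
  set E : Matrix n n ℂ := (Hρ.eigenvectorUnitary : Matrix n n ℂ)
  set F : Matrix n n ℂ := (Hσ.eigenvectorUnitary : Matrix n n ℂ)
  set r' := Hρ.eigenvalues
  set s' := Hσ.eigenvalues
  have hE' := mul_eq_one_comm.mp hE
  have hF' := mul_eq_one_comm.mp hF
  set p := 2 * z with hp
  set R : n → ℂ := fun i => ((r' i ^ (1 / p * α) : ℝ) : ℂ) with hR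
  set S : n → ℂ := fun i => ((s' i ^ (1 / p * (1 - α)) : ℝ) : ℂ) with hS
  set Z := diagonal R * (Eᴴ * F) * diagonal S * Fᴴ with hZ
  have hRR : diagonal (fun i => ((r' i ^ (α / z) : ℝ) : ℂ)) = diagonal R * diagonal R := by
    rw [diagonal_mul_diagonal]
    congr 1; ext i
    simp only [hR]
    rw [← Complex.ofReal_mul, ← sq, ← Real.rpow_natCast, ← Real.rpow_mul (hr0 i)]
    congr 3; rw [hp]; push_cast; field_simp
  have hSS : (fun i => ((s' i ^ ((1 - α) / p) : ℝ) : ℂ)) = S := by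
    ext i; simp only [hS]; congr 2; ring
  have sR : star R = R := by ext i; simp [hR]
  have sS : star S = S := by ext i; simp [hS]
  have hM : mpow σ ((1 - α) / p) * mpow ρ (α / z) * mpow σ ((1 - α) / p) = Zᴴ * Z := by
    rw [pρ, pσ, hRR, hSS, hZ]
    simp only [conjTranspose_mul, diagonal_conjTranspose, sR, sS, conjTranspose_conjTranspose,
      Matrix.mul_assoc]
  have hMh : (Zᴴ * Z).IsHermitian := isHermitian_conjTranspose_mul_self Z
  have hl := (posSemidef_conjTranspose_mul_self Z).eigenvalues_nonneg
  have hQ2 : ∑ k, hMh.eigenvalues k ^ z = t ^ α * u ^ (1 - α) := by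
    rw [← hQ, Qaz, ← hp, hM, trace_mpow hMh]
  have hW := eig_unit hMh
  have sM := eig_spec hMh
  set W : Matrix n n ℂ := (hMh.eigenvectorUnitary : Matrix n n ℂ)
  set l := hMh.eigenvalues
  have hW' := mul_eq_one_comm.mp hW
  obtain ⟨V, hV, hV2⟩ := svd_aux Z W l hl (by
    rw [conjTranspose_mul, Matrix.mul_assoc, ← Matrix.mul_assoc Zᴴ, sM, Matrix.mul_assoc, Matrix.mul_assoc,
      hW', Matrix.mul_one, ← Matrix.mul_assoc, hW', Matrix.one_mul])
  have hp1 : 1 ≤ p := by rw [hp]; linarith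
  have hp0 : 0 < p := by linarith
  have hKpos : 0 < t ^ α * u ^ (1 - α) := by positivity
  have hc := core p hp1 α hα0 hα1 (fun k => √(l k) / (t ^ α * u ^ (1 - α)) ^ (1 / p))
    (fun i => r' i / t) (fun i => s' i / u)
    (fun k => by positivity) (fun i => div_nonneg (hr0 i) ht.le)
    (fun i => div_nonneg (hs0 i) hu.le)
    (by
      have : ∀ k, (√(l k) / (t ^ α * u ^ (1 - α)) ^ (1 / p)) ^ p
          = l k ^ z / (t ^ α * u ^ (1 - α)) := by
        intro k
        rw [Real.div_rpow (Real.sqrt_nonneg _) (by positivity), ← Real.rpow_mul hKpos.le,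
          one_div_mul_cancel hp0.ne', Real.rpow_one, Real.sqrt_eq_rpow, ← Real.rpow_mul (hl k)]
        congr 2; rw [hp]; ring
      simp only [this]
      rw [← Finset.sum_div, hQ2, div_self hKpos.ne'])
    (by rw [← Finset.sum_div, ← ht1, div_self ht.ne'])
    (by rw [← Finset.sum_div, ← hu1, div_self hu.ne'])
    Vᴴ (Eᴴ * F) (Fᴴ * W)
    (by rw [conjTranspose_conjTranspose]; exact mul_eq_one_comm.mp hV)
    (by rw [conjTranspose_mul, conjTranspose_conjTranspose, Matrix.mul_assoc, ← Matrix.mul_assoc F,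
          hF, Matrix.one_mul, hE'])
    (by rw [conjTranspose_mul, conjTranspose_conjTranspose, Matrix.mul_assoc, ← Matrix.mul_assoc W,
          hW, Matrix.one_mul, hF'])
    (by
      have a1 : diagonal (fun i => (((r' i / t) ^ (1 / p * α) : ℝ) : ℂ)) =
          (((t ^ (1 / p * α))⁻¹ : ℝ) : ℂ) • diagonal R := by
        rw [← diagonal_smul]; congr 1; ext i
        rw [Real.div_rpow (hr0 i) ht.le]
        simp [hR]; ring
      have a2 : diagonal (fun i => (((s' i / u) ^ (1 / p * (1 - α)) : ℝ) : ℂ)) =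
          (((u ^ (1 / p * (1 - α)))⁻¹ : ℝ) : ℂ) • diagonal S := by
        rw [← diagonal_smul]; congr 1; ext i
        rw [Real.div_rpow (hs0 i) hu.le]
        simp [hS]; ring
      have a3 : diagonal (fun k => ((√(l k) / (t ^ α * u ^ (1 - α)) ^ (1 / p) : ℝ) : ℂ)) =
          ((((t ^ (1 / p * α))⁻¹ * (u ^ (1 / p * (1 - α)))⁻¹ : ℝ)) : ℂ) •
            diagonal (fun k => ((√(l k) : ℝ) : ℂ)) := by
        rw [← diagonal_smul]; congr 1; ext i
        rw [Real.mul_rpow (by positivity) (by positivity), ← Real.rpow_mul ht.le,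
          ← Real.rpow_mul hu.le, mul_comm α, mul_comm (1 - α)]
        rw [Pi.smul_apply, smul_eq_mul, ← Complex.ofReal_mul]
        congr 1
        rw [div_eq_mul_inv, mul_inv]; ring
      rw [a1, a2, a3, ← hV2, hZ]
      simp only [Matrix.mul_smul, Matrix.smul_mul, smul_smul, Matrix.mul_assoc]
      rw [← Complex.ofReal_mul]
      congr 2
      ring)
  have c1 : diagonal (fun i => ((r' i / t : ℝ) : ℂ)) = (t : ℂ)⁻¹ • diagonal (fun i => (r' i : ℂ)) := by
    rw [← diagonal_smul]; congr 1; ext i; simp; ring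
  have c2 : diagonal (fun i => ((s' i / u : ℝ) : ℂ)) = (u : ℂ)⁻¹ • diagonal (fun i => (s' i : ℂ)) := by
    rw [← diagonal_smul]; congr 1; ext i; simp; ring
  rw [c1, c2] at hc
  have hc2 := congrArg (fun T => E * T * Fᴴ) hc
  have l1 : E * ((t : ℂ)⁻¹ • diagonal (fun i => (r' i : ℂ)) * (Eᴴ * F)) * Fᴴ = (t : ℂ)⁻¹ • ρ := by
    rw [sρ]
    simp only [Matrix.mul_smul, Matrix.smul_mul, Matrix.mul_assoc, hF, Matrix.mul_one]
  have l2 : E * ((Eᴴ * F) * (u : ℂ)⁻¹ • diagonal (fun i => (s' i : ℂ))) * Fᴴ = (u : ℂ)⁻¹ • σ := by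
    rw [sσ]
    simp only [Matrix.mul_smul, Matrix.smul_mul]
    rw [← Matrix.mul_assoc, ← Matrix.mul_assoc, hE, Matrix.one_mul]
  simp only [l1, l2] at hc2
  have ht' : (t : ℂ) ≠ 0 := by exact_mod_cast ht.ne'
  have hu' : (u : ℂ) ≠ 0 := by exact_mod_cast hu.ne'
  have hc3 := congrArg (fun T => ((t : ℂ) * u) • T) hc2
  simp only [smul_smul] at hc3
  rw [mul_right_comm, mul_inv_cancel₀ ht', one_mul, mul_assoc, mul_inv_cancel₀ hu', mul_one] at hc3
  exact hc3

lemma backward {n : Type*} [Fintype n] [DecidableEq n] (α z : ℝ) (hα0 : 0 < α) (hα1 : α < 1)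
    (hz : (1 : ℝ) / 2 ≤ z)
    (ρ σ : Matrix n n ℂ) (hρ : ρ.PosSemidef) (hσ : σ.PosSemidef)
    (hρ0 : ρ ≠ 0) (hσ0 : σ ≠ 0) (h : σ.trace • ρ = ρ.trace • σ) :
    Qaz α z ρ σ = (ρ.trace.re) ^ α * (σ.trace.re) ^ (1 - α) := by
  have hz0 : 0 < z := by linarith
  obtain ⟨ht, hte⟩ := trace_re_pos hρ hρ0
  obtain ⟨hu, hue⟩ := trace_re_pos hσ hσ0
  have Hρ := hρ.isHermitian
  have Hσ := hσ.isHermitian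
  rw [hte, hue] at h
  set t := ρ.trace.re with htdef
  set u := σ.trace.re with hudef
  have ht' : (t : ℂ) ≠ 0 := by exact_mod_cast ht.ne'
  have hσe : σ = (u / t) • ρ := by
    have := congrArg (fun T => (t : ℂ)⁻¹ • T) h
    simp only [smul_smul] at this
    rw [inv_mul_cancel₀ ht', one_smul] at this
    rw [← this]
    ext i j
    rw [Matrix.smul_apply, Matrix.smul_apply, Complex.real_smul, smul_eq_mul]
    push_cast; ring
  set c := u / t with hc
  have hc0 : 0 < c := by positivity
  have hfin : (spectrum ℝ ρ).Finite := finite_real_spectrum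
  have hsp : ∀ x ∈ spectrum ℝ ρ, 0 ≤ x := by
    intro x hx
    rw [Hρ.spectrum_real_eq_range_eigenvalues] at hx
    obtain ⟨i, rfl⟩ := hx
    exact hρ.eigenvalues_nonneg i
  have hsa : IsSelfAdjoint ρ := Hρ
  have hcont : ∀ f : ℝ → ℝ, ContinuousOn f (spectrum ℝ ρ) := fun f => hfin.continuousOn f
  have e1 : mpow σ ((1 - α) / (2 * z)) = cfc (fun x : ℝ => (c * x) ^ ((1 - α) / (2 * z))) ρ := by
    rw [mpow_eq_cfc Hσ, hσe]
    exact (cfc_comp_const_mul c (fun x : ℝ => x ^ ((1 - α) / (2 * z))) ρ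
      ((hfin.image _).continuousOn _) hsa).symm
  have e2 : mpow σ ((1 - α) / (2 * z)) * mpow ρ (α / z) * mpow σ ((1 - α) / (2 * z)) =
      cfc (fun x : ℝ => (c * x) ^ ((1 - α) / (2 * z)) * x ^ (α / z) *
        (c * x) ^ ((1 - α) / (2 * z))) ρ := by
    rw [e1, mpow_eq_cfc Hρ, ← cfc_mul _ _ ρ (hcont _) (hcont _), ← cfc_mul _ _ ρ (hcont _) (hcont _)]
  have e3 : mpow (mpow σ ((1 - α) / (2 * z)) * mpow ρ (α / z) * mpow σ ((1 - α) / (2 * z))) z =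
      (c ^ (1 - α)) • ρ := by
    have hH : (cfc (fun x : ℝ => (c * x) ^ ((1 - α) / (2 * z)) * x ^ (α / z) *
        (c * x) ^ ((1 - α) / (2 * z))) ρ).IsHermitian :=
      (cfc_predicate (R := ℝ) (p := IsSelfAdjoint) _ ρ)
    rw [e2, mpow_eq_cfc hH,
      ← cfc_comp' _ _ ρ ((hfin.image _).continuousOn _) (hcont _) hsa,
      ← cfc_const_mul_id _ ρ hsa]
    refine cfc_congr fun x hx => ?_
    have hx0 := hsp x hx
    have hcx : 0 ≤ c * x := by positivity
    rw [mul_right_comm, ← Real.rpow_add_of_nonneg hcx (div_nonneg (by linarith) (by positivity))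
      (div_nonneg (by linarith) (by positivity)), Real.mul_rpow (by positivity) (by positivity),
      ← Real.rpow_mul hcx, ← Real.rpow_mul hx0]
    have g1 : ((1 - α) / (2 * z) + (1 - α) / (2 * z)) * z = 1 - α := by field_simp; ring
    have g2 : α / z * z = α := by field_simp
    rw [g1, g2, Real.mul_rpow hc0.le hx0, mul_assoc, ← Real.rpow_add_of_nonneg hx0 (by linarith) hα0.le]
    simp
  rw [Qaz, e3, trace_smul, Complex.real_smul, Complex.re_ofReal_mul, ← htdef, hc,
    Real.div_rpow hu.le ht.le, Real.rpow_sub ht, Real.rpow_one]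
  have := Real.rpow_pos_of_pos ht α
  field_simp

/-- Equality case of strict positivity: for `0 < α < 1`, `z ≥ 1/2` and nonzero
positive semidefinite `ρ, σ`, `Q_{α,z}(ρ‖σ) = (Tr ρ)^α (Tr σ)^{1−α}` iff
`(Tr σ) ρ = (Tr ρ) σ`. -/
theorem Qaz_eq_trace_rpow_iff (n : ℕ) (α z : ℝ) (hα0 : 0 < α) (hα1 : α < 1)
    (hz : (1 : ℝ) / 2 ≤ z)
    (ρ σ : Matrix (Fin n) (Fin n) ℂ) (hρ : ρ.PosSemidef) (hσ : σ.PosSemidef)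
    (hρ0 : ρ ≠ 0) (hσ0 : σ ≠ 0) :
    Qaz α z ρ σ = (ρ.trace.re) ^ α * (σ.trace.re) ^ (1 - α) ↔
      σ.trace • ρ = ρ.trace • σ := by
  exact ⟨forward α z hα0 hα1 hz ρ σ hρ hσ hρ0 hσ0, backward α z hα0 hα1 hz ρ σ hρ hσ hρ0 hσ0⟩
end
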